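/- Finiteness of the third-order coefficient integral: the function w ↦ w·(P(Z⁺ + Ũ ≥ w) − C·M^Y/(Y·w^Y) − C·(G+1)^Y/(Y·w^Y)) is Lebesgue integrable on (0,∞). -/

import Mathlib

open MeasureTheory ProbabilityTheory Filter Topology Asymptotics Set

/-! Let `ψ u = C Γ(-Y) (-iu) ^ Y` be the exponent of a stable law `μ`. The Fourier transform of
`x μ(dx)` is that of `μ` times a multiple of the derivative of `ψ`, that is, of `(-iu) ^ (Y - 1)`.
Multiplied by the transform of the indicator of `(0, 1]`, this power is the transform of an
integrable kernel, a unit increment of `s₊ ^ (1 - Y)`. Inverting the transforms gives a Stein-type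
identity for bounded test functions. Tested on `1 / z` cut off to a half-line, it yields the tails
of `μ`: the right one is `(C / Y) w ^ (-Y) + O(w ^ (-Y - 1))` and, the kernel being one-sided, the
left one is `O(w ^ (-Y - 1))`.

Since `Z⁺ + Ũ = max (M U + G V) ((M - 1) U + (G + 1) V)`, a value above `w` is due to a single big
jump, up to an event of probability `O(w ^ (-Y - 1))`: when `U` alone is large the maximum is its
first argument, and when `V` alone is large it is the second. These two cases contribute the two
subtracted terms, so that the integrand is `O(w ^ (-Y))` at infinity; near `0` it is
`O(w ^ (1 - Y))`. -/

section SignedDensity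

variable {X E : Type*} [MeasurableSpace X] {m : Measure X} {a : X → ℝ}
  [NormedAddCommGroup E] [NormedSpace ℝ E]

lemma integral_withDensity_sub_integral_withDensity_neg (ha : Integrable a m) {f : X → E} {B : ℝ}
    (hf : AEStronglyMeasurable f m) (hB : ∀ x, ‖f x‖ ≤ B) :
    ∫ x, f x ∂m.withDensity (fun x => ENNReal.ofReal (a x)) -
      ∫ x, f x ∂m.withDensity (fun x => ENNReal.ofReal (-a x)) = ∫ x, a x • f x ∂m := by
  have hpos : Integrable (fun x => max (a x) 0 • f x) m :=
    ha.pos_part.smul_bdd B hf (ae_of_all _ hB)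
  have hneg : Integrable (fun x => max (-a x) 0 • f x) m :=
    ha.neg_part.smul_bdd B hf (ae_of_all _ hB)
  have ham : AEMeasurable a m := ha.aemeasurable
  rw [integral_withDensity_eq_integral_toReal_smul₀ (by fun_prop) (by simp),
    integral_withDensity_eq_integral_toReal_smul₀ (by fun_prop) (by simp)]
  simp only [ENNReal.toReal_ofReal']
  rw [← integral_sub hpos hneg]
  simp_rw [← sub_smul, max_zero_sub_eq_self]

lemma integrable_smul_exp_mul_I {T : X → ℝ} (ha : Integrable a m) (hT : Measurable T) (u : ℝ) :
    Integrable (fun x => a x • Complex.exp (u * T x * Complex.I)) m := by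
  refine ha.smul_bdd 1 (by fun_prop) (ae_of_all _ fun x => ?_)
  rw [← Complex.ofReal_mul, Complex.norm_exp_ofReal_mul_I]

lemma ext_of_charFun_of_pos {μ ν : Measure ℝ} [IsFiniteMeasure μ] [IsFiniteMeasure ν]
    (h : ∀ u, 0 < u → charFun μ u = charFun ν u) : μ = ν := by
  have hne : EqOn (charFun μ) (charFun ν) {0}ᶜ := by
    intro u hu
    rcases lt_or_gt_of_ne hu with hneg | hpos
    · exact star_injective (by simpa [charFun_neg] using h (-u) (neg_pos.2 hneg))
    · exact h u hpos
  exact Measure.ext_of_charFun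
    (continuous_charFun.ext_on (dense_compl_singleton 0) continuous_charFun hne)

lemma integral_smul_comp_eq_zero_of_fourier_eq_zero {T : X → ℝ} (ha : Integrable a m)
    (hT : Measurable T)
    (h : ∀ u : ℝ, 0 < u → ∫ x, a x • Complex.exp (u * T x * Complex.I) ∂m = 0)
    {g : ℝ → E} {B : ℝ} (hg : StronglyMeasurable g) (hB : ∀ x, ‖g x‖ ≤ B) :
    ∫ x, a x • g (T x) ∂m = 0 := by
  set mpos := m.withDensity fun x => ENNReal.ofReal (a x)
  set mneg := m.withDensity fun x => ENNReal.ofReal (-a x)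
  have : IsFiniteMeasure mpos := isFiniteMeasure_withDensity_ofReal ha.2
  have : IsFiniteMeasure mneg := isFiniteMeasure_withDensity_ofReal ha.neg.2
  have hmap : mpos.map T = mneg.map T := by
    refine ext_of_charFun_of_pos fun u hu => ?_
    rw [charFun_apply_real, charFun_apply_real, integral_map hT.aemeasurable (by fun_prop),
      integral_map hT.aemeasurable (by fun_prop), ← sub_eq_zero,
      integral_withDensity_sub_integral_withDensity_neg ha (B := 1) (by fun_prop), h u hu]
    intro x
    rw [← Complex.ofReal_mul, Complex.norm_exp_ofReal_mul_I]
  rw [← integral_withDensity_sub_integral_withDensity_neg (f := fun x => g (T x)) ha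
    (hg.comp_measurable hT).aestronglyMeasurable fun x => hB (T x), sub_eq_zero,
    ← integral_map hT.aemeasurable hg.aestronglyMeasurable, hmap,
    integral_map hT.aemeasurable hg.aestronglyMeasurable]

end SignedDensity

section CrossCorrelation

/-- The cross-correlation `x ↦ ∫ k(s) g(x + s) ds` of a kernel `k` with a test function `g`. Against
a measure, it pairs like the convolution of that measure with `k`. -/
noncomputable def crossCorr (k g : ℝ → ℝ) (x : ℝ) : ℝ := ∫ s, k s * g (x + s)

variable {k l g : ℝ → ℝ}

lemma measurable_crossCorr (hk : Measurable k) (hg : Measurable g) :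
    Measurable (crossCorr k g) := by
  have huncurry : StronglyMeasurable (Function.uncurry fun x s => k s * g (x + s)) :=
    Measurable.stronglyMeasurable (by fun_prop)
  exact huncurry.integral_prod_right.measurable

lemma abs_crossCorr_le (hk : Integrable k) {x B : ℝ} (hB : ∀ s, k s ≠ 0 → |g (x + s)| ≤ B) :
    |crossCorr k g x| ≤ (∫ s, |k s|) * B := by
  rw [← integral_mul_const]
  refine (Real.norm_eq_abs _).symm.le.trans
    (norm_integral_le_of_norm_le (hk.abs.mul_const B) (ae_of_all _ fun s => ?_))
  rw [Real.norm_eq_abs, abs_mul]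
  rcases eq_or_ne (k s) 0 with hs | hs
  · simp [hs]
  · exact mul_le_mul_of_nonneg_left (hB s hs) (abs_nonneg _)

variable {μ : Measure ℝ} [SFinite μ] {a b : ℝ → ℝ} {B : ℝ}

lemma integral_mul_crossCorr (ha : Integrable a μ) (hk : Integrable k) (hg : Measurable g)
    (hB : ∀ x, |g x| ≤ B) :
    ∫ x, a x * crossCorr k g x ∂μ =
      ∫ p, (a p.1 * k p.2) • g (p.1 + p.2) ∂μ.prod volume := by
  have hint : Integrable (fun p : ℝ × ℝ => (a p.1 * k p.2) • g (p.1 + p.2)) (μ.prod volume) :=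
    (ha.mul_prod hk).smul_bdd B (Measurable.aestronglyMeasurable (by fun_prop))
      (ae_of_all _ fun p => hB _)
  rw [integral_prod _ hint]
  simp only [crossCorr, smul_eq_mul, mul_assoc, integral_const_mul]

lemma integral_prod_smul_exp_add_mul_I (u : ℝ) :
    ∫ p : ℝ × ℝ, (a p.1 * k p.2) • Complex.exp (u * (p.1 + p.2 : ℝ) * Complex.I) ∂μ.prod volume =
      (∫ x, a x • Complex.exp (u * x * Complex.I) ∂μ) *
        ∫ s, k s • Complex.exp (u * s * Complex.I) := by
  rw [← integral_prod_mul]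
  congr 1 with p
  rw [Complex.ofReal_add, mul_add, add_mul, Complex.exp_add, smul_mul_smul_comm]

lemma integral_mul_crossCorr_eq_of_fourier_eq (ha : Integrable a μ) (hb : Integrable b μ)
    (hk : Integrable k) (hl : Integrable l)
    (h : ∀ u : ℝ, 0 < u →
      (∫ x, a x • Complex.exp (u * x * Complex.I) ∂μ) * (∫ s, k s • Complex.exp (u * s * Complex.I))
        = (∫ x, b x • Complex.exp (u * x * Complex.I) ∂μ) *
          ∫ s, l s • Complex.exp (u * s * Complex.I))
    (hg : Measurable g) (hB : ∀ x, |g x| ≤ B) :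
    ∫ x, a x * crossCorr k g x ∂μ = ∫ x, b x * crossCorr l g x ∂μ := by
  have hak := ha.mul_prod hk
  have hbl := hb.mul_prod hl
  have hT : Measurable fun p : ℝ × ℝ => p.1 + p.2 := measurable_fst.add measurable_snd
  have hbdd {c : ℝ × ℝ → ℝ} (hc : Integrable c (μ.prod volume)) :
      Integrable (fun p : ℝ × ℝ => c p • g (p.1 + p.2)) (μ.prod volume) :=
    hc.smul_bdd B (hg.comp hT).aestronglyMeasurable (ae_of_all _ fun p => hB _)
  rw [integral_mul_crossCorr ha hk hg hB, integral_mul_crossCorr hb hl hg hB, ← sub_eq_zero,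
    ← integral_sub (hbdd hak) (hbdd hbl)]
  simp_rw [← sub_smul]
  refine integral_smul_comp_eq_zero_of_fourier_eq_zero (hak.sub hbl) hT (fun u hu => ?_)
    hg.stronglyMeasurable hB
  simp_rw [Pi.sub_apply, sub_smul]
  rw [integral_sub (integrable_smul_exp_mul_I hak hT u) (integrable_smul_exp_mul_I hbl hT u),
    integral_prod_smul_exp_add_mul_I, integral_prod_smul_exp_add_mul_I, h u hu, sub_self]

end CrossCorrelation

section LaplaceTransform

lemma integrableOn_rpow_mul_exp_neg_mul {p b : ℝ} (hp : -1 < p) (hb : 0 < b) :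
    IntegrableOn (fun t : ℝ => t ^ p * Real.exp (-(b * t))) (Ioi 0) := by
  simpa using integrableOn_rpow_mul_exp_neg_mul_rpow hp one_pos hb

lemma norm_rpow_smul_cexp_neg_mul {p t : ℝ} (ht : 0 ≤ t) (z : ℂ) :
    ‖t ^ p • Complex.exp (-(z * t))‖ = t ^ p * Real.exp (-(z.re * t)) := by
  rw [norm_smul, Real.norm_of_nonneg (Real.rpow_nonneg ht p), Complex.norm_exp]
  simp

lemma integrableOn_rpow_smul_cexp_neg_mul {p : ℝ} (hp : -1 < p) {z : ℂ} (hz : 0 < z.re) :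
    IntegrableOn (fun t : ℝ => t ^ p • Complex.exp (-(z * t))) (Ioi 0) := by
  refine (integrableOn_rpow_mul_exp_neg_mul hp hz).mono'
    (Measurable.aestronglyMeasurable (by fun_prop)) ?_
  filter_upwards [self_mem_ae_restrict measurableSet_Ioi] with t ht
  exact (norm_rpow_smul_cexp_neg_mul (le_of_lt ht) z).le

lemma differentiableOn_integral_rpow_smul_cexp_neg_mul {p : ℝ} (hp : -1 < p) :
    DifferentiableOn ℂ (fun z : ℂ => ∫ t in Ioi (0 : ℝ), t ^ p • Complex.exp (-(z * t)))
      {z | 0 < z.re} := by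
  intro z₀ (hz₀ : 0 < z₀.re)
  have hnear : {z : ℂ | z₀.re / 2 < z.re} ∈ 𝓝 z₀ :=
    (isOpen_lt continuous_const Complex.continuous_re).mem_nhds (half_lt_self hz₀)
  have hderiv (z : ℂ) (t : ℝ) : HasDerivAt (fun z : ℂ => t ^ p • Complex.exp (-(z * t)))
      (t ^ p • (Complex.exp (-(z * t)) * -(1 * t))) z :=
    (((hasDerivAt_id z).mul_const (t : ℂ)).neg.cexp).const_smul (t ^ p)
  refine (hasDerivAt_integral_of_dominated_loc_of_deriv_le
    (F := fun z (t : ℝ) => t ^ p • Complex.exp (-(z * t)))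
    (F' := fun z t => t ^ p • (Complex.exp (-(z * t)) * -(1 * t))) hnear
    (Eventually.of_forall fun z => Measurable.aestronglyMeasurable (by fun_prop))
    (integrableOn_rpow_smul_cexp_neg_mul hp hz₀)
    (Measurable.aestronglyMeasurable (by fun_prop))
    ?_ (integrableOn_rpow_mul_exp_neg_mul (p := p + 1) (by linarith) (half_pos hz₀))
    (ae_of_all _ fun t z _ => hderiv z t)).2.differentiableAt.differentiableWithinAt
  filter_upwards [self_mem_ae_restrict measurableSet_Ioi] with t ht z hz
  have ht : (0 : ℝ) < t := ht
  rw [← smul_mul_assoc, norm_mul, norm_rpow_smul_cexp_neg_mul ht.le, Real.rpow_add_one ht.ne',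
    mul_right_comm]
  simp only [one_mul, norm_neg, Complex.norm_real, Real.norm_of_nonneg ht.le]
  gcongr

lemma integral_rpow_smul_cexp_neg_mul {p : ℝ} (hp : -1 < p) {z : ℂ} (hz : 0 < z.re) :
    ∫ t in Ioi (0 : ℝ), t ^ p • Complex.exp (-(z * t)) =
      Real.Gamma (p + 1) * z ^ (-(p + 1) : ℂ) := by
  have hopen : IsOpen {z : ℂ | 0 < z.re} := isOpen_lt continuous_const Complex.continuous_re
  have hrhs : DifferentiableOn ℂ (fun z : ℂ => Real.Gamma (p + 1) * z ^ (-(p + 1) : ℂ))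
      {z | 0 < z.re} := fun z hz =>
    ((differentiableAt_id.cpow_const (Or.inl hz)).const_mul _).differentiableWithinAt
  have hreal (x : ℝ) (hx : 0 < x) : ∫ t in Ioi (0 : ℝ), t ^ p • Complex.exp (-(x * t)) =
      Real.Gamma (p + 1) * (x : ℂ) ^ (-(p + 1) : ℂ) := by
    have hGamma := Real.integral_rpow_mul_exp_neg_mul_Ioi (a := p + 1) (by linarith) hx
    rw [add_sub_cancel_right, one_div, Real.inv_rpow hx.le, ← Real.rpow_neg hx.le, mul_comm]
      at hGamma
    have hcast := congrArg ((↑) : ℝ → ℂ) hGamma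
    rw [← integral_complex_ofReal] at hcast
    simpa [Complex.ofReal_cpow hx.le] using hcast
  have hofReal : Tendsto ((↑) : ℝ → ℂ) (𝓝[≠] 1) (𝓝[≠] 1) :=
    tendsto_nhdsWithin_iff.2 ⟨(Complex.continuous_ofReal.tendsto' 1 1 (by simp)).mono_left
      nhdsWithin_le_nhds, eventually_nhdsWithin_of_forall fun x hx => by simpa using hx⟩
  have hfreq : ∃ᶠ x : ℝ in 𝓝[≠] 1, 0 < x :=
    (eventually_nhdsWithin_of_eventually_nhds (lt_mem_nhds one_pos)).frequently
  exact ((differentiableOn_integral_rpow_smul_cexp_neg_mul hp).analyticOnNhd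
    hopen).eqOn_of_preconnected_of_frequently_eq (hrhs.analyticOnNhd hopen)
    (convex_halfSpace_re_gt 0).isPreconnected (z₀ := 1) (by simp)
    (hofReal.frequently (hfreq.mono hreal)) hz

lemma continuousOn_integral_smul_cexp_neg_mul {k : ℝ → ℝ} (hk : Integrable k)
    (hneg : ∀ s < 0, k s = 0) :
    ContinuousOn (fun z : ℂ => ∫ s, k s • Complex.exp (-(z * s))) {z | 0 ≤ z.re} := by
  refine continuousOn_of_dominated (bound := fun s => |k s|)
    (fun z _ => hk.aestronglyMeasurable.smul (by fun_prop)) (fun z hz => ae_of_all _ fun s => ?_)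
    hk.abs (ae_of_all _ fun s => by fun_prop)
  rcases lt_or_ge s 0 with hs | hs
  · simp [hneg s hs]
  · have hexp : ‖Complex.exp (-(z * s))‖ ≤ 1 := by
      rw [Complex.norm_exp, Real.exp_le_one_iff]
      simpa using mul_nonneg hz hs
    simpa [norm_smul] using mul_le_of_le_one_right (abs_nonneg (k s)) hexp

end LaplaceTransform

section TruncatedPower

/-- The truncated power `s₊ ^ p`, equal to `s ^ p` for `s > 0` and to `0` for `s ≤ 0`. -/
noncomputable def posRpow (p s : ℝ) : ℝ := (Ioi 0).indicator (· ^ p) s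

/-- The backward unit increment `s₊ ^ p - (s - 1)₊ ^ p` of the truncated power. For `-1 < p ≤ 0` it
is integrable, although neither of its two terms is; for `p = 0` it is the indicator of `(0, 1]`. -/
noncomputable def posRpowDiff (p s : ℝ) : ℝ := posRpow p s - posRpow p (s - 1)

variable {p s : ℝ}

lemma posRpow_of_pos (hs : 0 < s) : posRpow p s = s ^ p := indicator_of_mem (mem_Ioi.2 hs) _

lemma posRpow_of_nonpos (hs : s ≤ 0) : posRpow p s = 0 := indicator_of_notMem (notMem_Ioi.2 hs) _

lemma measurable_posRpow : Measurable (posRpow p) :=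
  Measurable.indicator (by fun_prop) measurableSet_Ioi

lemma posRpowDiff_of_nonpos (hs : s ≤ 0) : posRpowDiff p s = 0 := by
  rw [posRpowDiff, posRpow_of_nonpos hs, posRpow_of_nonpos (by linarith), sub_zero]

lemma measurable_posRpowDiff : Measurable (posRpowDiff p) :=
  measurable_posRpow.sub (measurable_posRpow.comp (measurable_id.sub_const 1))

lemma integrableOn_posRpow_Iic (hp : -1 < p) (b : ℝ) : IntegrableOn (posRpow p) (Iic b) := by
  have hIoc : IntegrableOn (· ^ p) (Ioc 0 |b|) :=
    (intervalIntegrable_iff_integrableOn_Ioc_of_le (abs_nonneg b)).1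
      (intervalIntegral.intervalIntegrable_rpow' hp)
  exact (integrableOn_indicator_iff measurableSet_Ioi).2
    (hIoc.mono_set fun x hx => ⟨hx.1, hx.2.trans (le_abs_self b)⟩)

lemma abs_rpow_sub_rpow_le {m x y : ℝ} (hp : p ≤ 1) (hm : 0 < m) (hx : m ≤ x) (hy : m ≤ y) :
    |x ^ p - y ^ p| ≤ |p| * m ^ (p - 1) * |x - y| := by
  refine Convex.norm_image_sub_le_of_norm_hasDerivWithin_le (f := fun t : ℝ => t ^ p)
    (f' := fun t => p * t ^ (p - 1)) (s := Ici m) (fun t ht => ?_) (fun t ht => ?_)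
    (convex_Ici m) hy hx
  · exact (Real.hasDerivAt_rpow_const (Or.inl (hm.trans_le ht).ne')).hasDerivWithinAt
  · have ht₀ : 0 < t := hm.trans_le ht
    rw [norm_mul, Real.norm_eq_abs, Real.norm_of_nonneg (by positivity)]
    gcongr ?_ * ?_
    exact Real.rpow_le_rpow_of_nonpos hm ht (by linarith)

lemma posRpowDiff_zero : posRpowDiff 0 s = (Ioc 0 1).indicator 1 s := by
  rcases le_or_gt s 0 with hs | hs
  · rw [posRpowDiff_of_nonpos hs, indicator_of_notMem fun h => hs.not_gt h.1]
  rcases le_or_gt s 1 with hs₁ | hs₁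
  · simp [posRpowDiff, posRpow_of_pos hs, posRpow_of_nonpos (sub_nonpos.2 hs₁), hs, hs₁]
  · simp [posRpowDiff, posRpow_of_pos hs, posRpow_of_pos (sub_pos.2 hs₁), hs₁]

lemma abs_posRpowDiff_le (hp : p ≤ 1) (hs : 1 < s) :
    |posRpowDiff p s| ≤ |p| * (s - 1) ^ (p - 1) := by
  rw [posRpowDiff, posRpow_of_pos (by linarith), posRpow_of_pos (by linarith)]
  simpa using abs_rpow_sub_rpow_le hp (sub_pos.2 hs) (sub_le_self s one_pos.le) le_rfl

lemma integrableOn_comp_sub_right {f : ℝ → ℝ} {S : Set ℝ} (hf : IntegrableOn f S) (c : ℝ) :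
    IntegrableOn (fun x => f (x - c)) ((· - c) ⁻¹' S) :=
  ((measurePreserving_sub_right volume c).integrableOn_comp_preimage
    (MeasurableEquiv.subRight c).measurableEmbedding).2 hf

lemma integrable_posRpowDiff (hp : p ∈ Ioc (-1) 0) : Integrable (posRpowDiff p) := by
  obtain ⟨hp₁, hp₀⟩ := hp
  have hleft : IntegrableOn (posRpowDiff p) (Iic 2) := by
    refine (integrableOn_posRpow_Iic hp₁ 2).sub ?_
    have hshift := integrableOn_comp_sub_right (integrableOn_posRpow_Iic hp₁ 1) 1
    rwa [preimage_sub_const_Iic, one_add_one_eq_two] at hshift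
  have hright : IntegrableOn (posRpowDiff p) (Ioi 2) := by
    have hbound : IntegrableOn (fun s : ℝ => |p| * (s - 1) ^ (p - 1)) (Ioi 2) := by
      rcases hp₀.eq_or_lt with rfl | hneg
      · simp
      have hshift := integrableOn_comp_sub_right
        (integrableOn_Ioi_rpow_of_lt (a := p - 1) (by linarith) one_pos) 1
      rw [preimage_sub_const_Ioi, one_add_one_eq_two] at hshift
      exact hshift.const_mul |p|
    refine hbound.mono' measurable_posRpowDiff.aestronglyMeasurable ?_
    filter_upwards [self_mem_ae_restrict measurableSet_Ioi] with t ht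
    exact abs_posRpowDiff_le (by linarith) (one_lt_two.trans ht)
  rw [← integrableOn_univ, ← Iic_union_Ioi]
  exact hleft.union hright

lemma posRpow_smul_eq_indicator (f : ℝ → ℂ) :
    (fun s => posRpow p s • f s) = (Ioi 0).indicator fun t => t ^ p • f t := by
  ext s
  by_cases hs : s ∈ Ioi (0 : ℝ) <;> simp [posRpow, hs]

lemma integrable_posRpow_smul_cexp (hp : -1 < p) {z : ℂ} (hz : 0 < z.re) :
    Integrable fun s : ℝ => posRpow p s • Complex.exp (-(z * s)) := by
  rw [posRpow_smul_eq_indicator, integrable_indicator_iff measurableSet_Ioi]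
  exact integrableOn_rpow_smul_cexp_neg_mul hp hz

lemma integral_posRpowDiff_smul_cexp_of_re_pos (hp : -1 < p) {z : ℂ} (hz : 0 < z.re) :
    ∫ s : ℝ, posRpowDiff p s • Complex.exp (-(z * s)) =
      Real.Gamma (p + 1) * z ^ (-(p + 1) : ℂ) * (1 - Complex.exp (-z)) := by
  have hint := integrable_posRpow_smul_cexp hp hz
  have hval : ∫ s : ℝ, posRpow p s • Complex.exp (-(z * s)) =
      Real.Gamma (p + 1) * z ^ (-(p + 1) : ℂ) := by
    rw [posRpow_smul_eq_indicator, integral_indicator measurableSet_Ioi,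
      integral_rpow_smul_cexp_neg_mul hp hz]
  have hshift (s : ℝ) : posRpowDiff p s • Complex.exp (-(z * s)) =
      posRpow p s • Complex.exp (-(z * s)) -
        Complex.exp (-z) * (posRpow p (s - 1) • Complex.exp (-(z * (s - 1 : ℝ)))) := by
    rw [posRpowDiff, sub_smul, mul_smul_comm, ← Complex.exp_add]
    congr 3
    push_cast
    ring
  simp_rw [hshift]
  rw [integral_sub hint ((hint.comp_sub_right 1).const_mul _), integral_const_mul,
    integral_sub_right_eq_self fun s : ℝ => posRpow p s • Complex.exp (-(z * s)), hval]
  ring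

lemma integral_posRpowDiff_smul_cexp (hp : p ∈ Ioc (-1) 0) {z : ℂ} (hz : 0 ≤ z.re)
    (hz₀ : z ≠ 0) :
    ∫ s : ℝ, posRpowDiff p s • Complex.exp (-(z * s)) =
      Real.Gamma (p + 1) * z ^ (-(p + 1) : ℂ) * (1 - Complex.exp (-z)) := by
  have hlhs := (continuousOn_integral_smul_cexp_neg_mul (integrable_posRpowDiff hp)
    fun s hs => posRpowDiff_of_nonpos hs.le).mono (sdiff_subset (t := {0}))
  have hrhs : ContinuousOn (fun z : ℂ => Real.Gamma (p + 1) * z ^ (-(p + 1) : ℂ) *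
      (1 - Complex.exp (-z))) ({z | 0 ≤ z.re} \ {0}) := by
    intro w ⟨hw, hw₀⟩
    have hslit : w ∈ Complex.slitPlane := Complex.mem_slitPlane_iff.2 <| by
      by_contra! h
      exact hw₀ (Complex.ext (h.1.antisymm hw) h.2)
    exact ((continuousAt_const.mul (continuousAt_id.cpow continuousAt_const hslit)).mul
      (by fun_prop)).continuousWithinAt
  refine EqOn.of_subset_closure (s := {z : ℂ | 0 < z.re})
    (fun w hw => integral_posRpowDiff_smul_cexp_of_re_pos hp.1 hw) hlhs hrhs
    (fun w (hw : 0 < w.re) => ?_) ?_ ⟨hz, hz₀⟩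
  · exact ⟨hw.le, fun h => by simp [mem_singleton_iff.1 h] at hw⟩
  · rw [Complex.closure_setOfPred_lt_re]
    exact sdiff_subset

lemma integral_posRpowDiff_smul_cexp_mul_I (hp : p ∈ Ioc (-1) 0) {u : ℝ} (hu : u ≠ 0) :
    ∫ s : ℝ, posRpowDiff p s • Complex.exp (u * s * Complex.I) =
      Real.Gamma (p + 1) * (-(u * Complex.I)) ^ (-(p + 1) : ℂ) *
        (1 - Complex.exp (u * Complex.I)) := by
  have h := integral_posRpowDiff_smul_cexp hp (z := -(u * Complex.I)) (by simp) (by simpa)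
  simpa only [neg_mul, neg_neg, mul_right_comm _ Complex.I] using h

end TruncatedPower

section Tail

variable {p : ℝ}

lemma measureReal_abs_gt_isBigO_of_charFun {μ : Measure ℝ} [IsProbabilityMeasure μ] {D : ℝ}
    (hp : 0 ≤ p) (h : ∀ u, ‖1 - charFun μ u‖ ≤ D * |u| ^ p) :
    (fun r => μ.real {x | r < |x|}) =O[atTop] fun r => r ^ (-p) := by
  have hD : 0 ≤ D := by simpa using (norm_nonneg _).trans (h 1)
  refine IsBigO.of_bound (2 * D * 2 ^ p) ?_
  filter_upwards [eventually_gt_atTop 0] with r hr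
  have hinv : 0 < r⁻¹ := inv_pos.2 hr
  have hint : ‖∫ t in (-2 * r⁻¹)..(2 * r⁻¹), 1 - charFun μ t‖
      ≤ D * (2 * r⁻¹) ^ p * |2 * r⁻¹ - -2 * r⁻¹| := by
    refine intervalIntegral.norm_integral_le_of_norm_le_const fun t ht => (h t).trans ?_
    rw [uIoc_of_le (by linarith)] at ht
    gcongr
    exact abs_le.2 ⟨by linarith [ht.1], ht.2⟩
  rw [Real.norm_of_nonneg measureReal_nonneg, Real.norm_of_nonneg (Real.rpow_nonneg hr.le _)]
  calc μ.real {x | r < |x|}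
      ≤ 2⁻¹ * r * ‖∫ t in (-2 * r⁻¹)..(2 * r⁻¹), 1 - charFun μ t‖ :=
        measureReal_abs_gt_le_integral_charFun hr
    _ ≤ 2⁻¹ * r * (D * (2 * r⁻¹) ^ p * |2 * r⁻¹ - -2 * r⁻¹|) := by gcongr
    _ = 2 * D * 2 ^ p * r ^ (-p) := by
        rw [abs_of_pos (by linarith), Real.mul_rpow two_pos.le hinv.le, Real.inv_rpow hr.le,
          ← Real.rpow_neg hr.le]
        field_simp
        ring

lemma integrable_of_measureReal_abs_gt_isBigO {X : Type*} [MeasurableSpace X] {μ : Measure X}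
    [IsFiniteMeasure μ] {f : X → ℝ} (hf : AEMeasurable f μ) (hp : 1 < p)
    (h : (fun r => μ.real {x | r < |f x|}) =O[atTop] fun r => r ^ (-p)) : Integrable f μ := by
  have hanti : Antitone fun r => μ.real {x | r < |f x|} := fun r s hrs =>
    measureReal_mono fun x (hx : s < |f x|) => hrs.trans_lt hx
  have hint : IntegrableOn (fun r => μ.real {x | r < |f x|}) (Ioi 0) :=
    ((hanti.locallyIntegrable.locallyIntegrableOn _).integrableOn_of_isBigO_atTop h
      (integrableAtFilter_rpow_atTop_iff.2 (by linarith))).mono_set Ioi_subset_Ici_self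
  refine ⟨hf.aestronglyMeasurable, ?_⟩
  rw [hasFiniteIntegral_iff_norm, lintegral_eq_lintegral_meas_lt μ
    (ae_of_all _ fun x => norm_nonneg (f x)) hf.norm]
  simpa only [ofReal_measureReal (measure_ne_top μ _), Real.norm_eq_abs] using hint.lintegral_lt_top

end Tail

section StableLaw

/-- `μ` is the centered, totally positively skewed strictly `Y`-stable law with Lévy density
`C x ^ (-Y - 1)` on `(0, ∞)`. Its characteristic exponent is `C Γ(-Y) (-iu) ^ Y`, with the principal
branch of the complex power. -/
def IsSpectrallyPositiveStable (μ : Measure ℝ) (Y C : ℝ) : Prop :=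
  ∀ u : ℝ, charFun μ u =
    Complex.exp (C * Real.Gamma (-Y) * (-(u * Complex.I)) ^ (Y : ℂ))

variable {Y C : ℝ}

lemma neg_mul_I_cpow (hY : Y ≠ 0) (u : ℝ) :
    (-(u * Complex.I)) ^ (Y : ℂ) = ((|u| ^ Y : ℝ) : ℂ) *
      (Real.cos (Real.pi * Y / 2) - Complex.I * Real.sign u * Real.sin (Real.pi * Y / 2)) := by
  rw [Complex.cpow_ofReal, norm_neg, norm_mul, Complex.norm_I, mul_one, Complex.norm_real,
    Real.norm_eq_abs]
  have hangle : Real.pi * Y / 2 = Real.pi / 2 * Y := by ring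
  rcases lt_trichotomy u 0 with hu | rfl | hu
  · have harg : Complex.arg (-(u * Complex.I)) = Real.pi / 2 := by
      rw [← neg_mul, ← Complex.ofReal_neg, Complex.arg_real_mul _ (neg_pos.2 hu), Complex.arg_I]
    rw [harg, Real.sign_of_neg hu, hangle]
    push_cast
    ring
  · simp [Real.zero_rpow hY]
  · have harg : Complex.arg (-(u * Complex.I)) = -(Real.pi / 2) := by
      rw [← mul_neg, Complex.arg_real_mul _ hu, Complex.arg_neg_I]
    rw [harg, Real.sign_of_pos hu, hangle, neg_mul, Real.cos_neg, Real.sin_neg]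
    push_cast
    ring

lemma norm_one_sub_exp_le {z : ℂ} (hz : ‖Complex.exp z‖ ≤ 1) :
    ‖1 - Complex.exp z‖ ≤ 2 * ‖z‖ := by
  rcases le_total ‖z‖ 1 with h | h
  · rw [norm_sub_rev]
    exact Complex.norm_exp_sub_one_le h
  · calc ‖1 - Complex.exp z‖ ≤ ‖(1 : ℂ)‖ + ‖Complex.exp z‖ := norm_sub_le _ _
      _ ≤ 2 * ‖z‖ := by rw [norm_one]; linarith

lemma Gamma_neg_mul_self (hY : Y ≠ 0) (hY₁ : Y ≠ 1) :
    Real.Gamma (-Y) * Y = Real.Gamma (2 - Y) / (Y - 1) := by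
  have h₀ := Real.Gamma_add_one (neg_ne_zero.2 hY)
  have h₁ := Real.Gamma_add_one (s := -Y + 1) fun h => hY₁ (by linarith)
  rw [eq_div_iff (sub_ne_zero.2 hY₁), show 2 - Y = -Y + 1 + 1 by ring, h₁, h₀]
  ring

variable {μ : Measure ℝ} [IsProbabilityMeasure μ]

lemma IsSpectrallyPositiveStable.norm_one_sub_charFun_le (h : IsSpectrallyPositiveStable μ Y C)
    (u : ℝ) : ‖1 - charFun μ u‖ ≤ 2 * |C * Real.Gamma (-Y)| * |u| ^ Y := by
  have hexp := norm_charFun_le_one (μ := μ) u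
  rw [h u] at hexp ⊢
  refine (norm_one_sub_exp_le hexp).trans_eq ?_
  rw [norm_mul, Complex.norm_cpow_real]
  simp [abs_mul, mul_assoc]

lemma IsSpectrallyPositiveStable.measureReal_abs_gt_isBigO (h : IsSpectrallyPositiveStable μ Y C)
    (hY : 0 ≤ Y) : (fun r => μ.real {x | r < |x|}) =O[atTop] fun r => r ^ (-Y) :=
  measureReal_abs_gt_isBigO_of_charFun hY h.norm_one_sub_charFun_le

lemma IsSpectrallyPositiveStable.integrable_id (h : IsSpectrallyPositiveStable μ Y C)
    (hY : 1 < Y) : Integrable id μ :=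
  integrable_of_measureReal_abs_gt_isBigO aemeasurable_id hY
    (h.measureReal_abs_gt_isBigO (by linarith))

lemma hasDerivAt_neg_mul_I_cpow {u : ℝ} (hu : u ≠ 0) :
    HasDerivAt (fun v : ℝ => (-(v * Complex.I)) ^ (Y : ℂ))
      (Y * (-(u * Complex.I)) ^ (Y - 1 : ℂ) * -Complex.I) u := by
  have hslit : -((u : ℂ) * Complex.I) ∈ Complex.slitPlane := Or.inr (by simpa)
  have hlin : HasDerivAt (fun z : ℂ => -(z * Complex.I)) (-(1 * Complex.I)) u :=
    ((hasDerivAt_id (u : ℂ)).mul_const Complex.I).neg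
  simpa only [one_mul] using (hlin.cpow_const hslit).comp_ofReal

lemma IsSpectrallyPositiveStable.integral_id_smul_cexp (h : IsSpectrallyPositiveStable μ Y C)
    (hY : 1 < Y) {u : ℝ} (hu : u ≠ 0) :
    ∫ x, x • Complex.exp (u * x * Complex.I) ∂μ =
      -(C * Real.Gamma (-Y) * Y * (-(u * Complex.I)) ^ (Y - 1 : ℂ)) * charFun μ u := by
  have hmoment := iteratedDeriv_charFun (μ := μ) (n := 1) (t := u)
    (by simpa using memLp_one_iff_integrable.2 (h.integrable_id hY))
  have hderiv := (((hasDerivAt_neg_mul_I_cpow (Y := Y) hu).const_mul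
    (C * Real.Gamma (-Y) : ℂ)).cexp).congr_of_eventuallyEq (.of_forall h)
  rw [iteratedDeriv_one, hderiv.deriv, ← h u] at hmoment
  simp only [pow_one] at hmoment
  simp only [Complex.real_smul]
  refine mul_left_cancel₀ Complex.I_ne_zero (hmoment.symm.trans ?_)
  ring

lemma IsSpectrallyPositiveStable.integral_id_mul_crossCorr (h : IsSpectrallyPositiveStable μ Y C)
    (hY : Y ∈ Ioo 1 2) {g : ℝ → ℝ} {B : ℝ} (hg : Measurable g) (hB : ∀ x, |g x| ≤ B) :
    ∫ x, x * crossCorr (posRpowDiff 0) g x ∂μ =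
      -(C / (Y - 1)) * ∫ x, crossCorr (posRpowDiff (1 - Y)) g x ∂μ := by
  obtain ⟨hY₁, hY₂⟩ := hY
  have hp : 1 - Y ∈ Ioc (-1) 0 := ⟨by linarith, by linarith⟩
  have hp₀ : (0 : ℝ) ∈ Ioc (-1) 0 := ⟨by norm_num, le_rfl⟩
  rw [← integral_const_mul]
  refine integral_mul_crossCorr_eq_of_fourier_eq (h.integrable_id hY₁) (integrable_const _)
    (integrable_posRpowDiff hp₀) (integrable_posRpowDiff hp) (fun u hu => ?_) hg hB
  have hz : -(u * Complex.I) ≠ 0 := by simpa using hu.ne'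
  have hGamma : (C * Real.Gamma (-Y) * Y : ℂ) = C / (Y - 1) * Real.Gamma (1 - Y + 1) := by
    exact_mod_cast show C * Real.Gamma (-Y) * Y = C / (Y - 1) * Real.Gamma (1 - Y + 1) by
      rw [mul_assoc, Gamma_neg_mul_self (by linarith) hY₁.ne', show 1 - Y + 1 = 2 - Y by ring]
      ring
  have hpow : (-(u * Complex.I)) ^ (Y - 1 : ℂ) * (-(u * Complex.I)) ^ (-1 : ℂ) =
      (-(u * Complex.I)) ^ (-((1 - Y) + 1) : ℂ) := by
    rw [← Complex.cpow_add _ _ hz]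
    ring_nf
  have hmoment := h.integral_id_smul_cexp hY₁ hu.ne'
  rw [charFun_apply_real] at hmoment
  simp only [integral_smul]
  rw [hmoment, integral_posRpowDiff_smul_cexp_mul_I hp₀ hu.ne',
    integral_posRpowDiff_smul_cexp_mul_I hp hu.ne']
  rw [hGamma, Complex.real_smul, zero_add, Real.Gamma_one]
  push_cast
  rw [zero_add, ← hpow]
  ring

end StableLaw

section Asymptotics

lemma isBigO_of_le_of_le {f f₁ f₂ g : ℝ → ℝ} {l : Filter ℝ} (h₁ : f₁ =O[l] g) (h₂ : f₂ =O[l] g)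
    (hl : ∀ᶠ w in l, f₁ w ≤ f w) (hu : ∀ᶠ w in l, f w ≤ f₂ w) : f =O[l] g := by
  refine IsBigO.trans (.of_bound 1 ?_) (h₁.norm_left.add h₂.norm_left)
  filter_upwards [hl, hu] with w hlw huw
  simp only [Real.norm_eq_abs, one_mul]
  rw [abs_of_nonneg (add_nonneg (abs_nonneg (f₁ w)) (abs_nonneg (f₂ w)))]
  exact abs_le.2 ⟨by linarith [neg_abs_le (f₁ w), abs_nonneg (f₂ w)],
    by linarith [le_abs_self (f₂ w), abs_nonneg (f₁ w)]⟩

variable {p : ℝ}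

lemma isBigO_const_mul_rpow {c : ℝ} (hc : 0 ≤ c) :
    (fun w : ℝ => (c * w) ^ p) =O[atTop] fun w => w ^ p := by
  refine (isBigO_const_mul_self (c ^ p) (fun w : ℝ => w ^ p) atTop).congr' ?_ .rfl
  filter_upwards [eventually_ge_atTop 0] with w hw
  rw [Real.mul_rpow hc hw]

lemma isBigO_comp_const_mul {f : ℝ → ℝ} (hf : f =O[atTop] fun w => w ^ p) {c : ℝ} (hc : 0 < c) :
    (fun w => f (c * w)) =O[atTop] fun w => w ^ p :=
  (hf.comp_tendsto (tendsto_id.const_mul_atTop hc)).trans (isBigO_const_mul_rpow hc.le)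

lemma isBigO_comp_add_one {f : ℝ → ℝ} (hf : f =O[atTop] fun w => w ^ p) (hp : p ≤ 0) :
    (fun w => f (w + 1)) =O[atTop] fun w => w ^ p := by
  refine (hf.comp_tendsto (tendsto_atTop_add_const_right _ 1 tendsto_id)).trans (.of_bound 1 ?_)
  filter_upwards [eventually_gt_atTop 0] with w hw
  rw [one_mul, Function.comp_apply, Real.norm_of_nonneg (by positivity), Real.norm_of_nonneg
    (by positivity)]
  exact Real.rpow_le_rpow_of_nonpos hw (by simp) hp

lemma isBigO_add_one_rpow_sub_rpow (hp : p ≤ 1) :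
    (fun w : ℝ => (w + 1) ^ p - w ^ p) =O[atTop] fun w => w ^ (p - 1) := by
  refine .of_bound |p| ?_
  filter_upwards [eventually_gt_atTop 0] with w hw
  rw [Real.norm_of_nonneg (Real.rpow_nonneg hw.le (p - 1))]
  simpa using abs_rpow_sub_rpow_le hp hw (by simp : w ≤ w + 1) le_rfl

end Asymptotics

section RightTail

lemma abs_posRpowDiff_sub_le {p s z m : ℝ} (hp : p ≤ 2) (hm : 0 < m) (hs : m ≤ s - 1)
    (hz : m ≤ z) :
    |posRpowDiff p s - p * z ^ (p - 1)| ≤ |p| * |p - 1| * m ^ (p - 2) * (1 + |s - z|) := by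
  have hderiv (t : ℝ) (ht : t ∈ Icc (s - 1) s) :
      HasDerivWithinAt (fun t : ℝ => t ^ p - p * z ^ (p - 1) * t)
        (p * t ^ (p - 1) - p * z ^ (p - 1) * 1) (Icc (s - 1) s) t :=
    ((Real.hasDerivAt_rpow_const (Or.inl (by linarith [ht.1]))).sub
      ((hasDerivAt_id t).const_mul _)).hasDerivWithinAt
  have hbound (t : ℝ) (ht : t ∈ Icc (s - 1) s) :
      ‖p * t ^ (p - 1) - p * z ^ (p - 1) * 1‖ ≤
        |p| * |p - 1| * m ^ (p - 2) * (1 + |s - z|) := by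
    have hts : |t - s| ≤ 1 := abs_le.2 ⟨by linarith [ht.1], by linarith [ht.2]⟩
    have hmvt := abs_rpow_sub_rpow_le (p := p - 1) (by linarith) hm (hs.trans ht.1) hz
    rw [mul_one, ← mul_sub, norm_mul, Real.norm_eq_abs, Real.norm_eq_abs, mul_assoc, mul_assoc]
    gcongr
    calc |t ^ (p - 1) - z ^ (p - 1)| ≤ |p - 1| * m ^ (p - 1 - 1) * |t - z| := hmvt
      _ ≤ |p - 1| * m ^ (p - 1 - 1) * (1 + |s - z|) := by
          gcongr
          linarith [abs_sub_le t s z]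
      _ = |p - 1| * (m ^ (p - 2) * (1 + |s - z|)) := by ring_nf
  have h := (convex_Icc (s - 1) s).norm_image_sub_le_of_norm_hasDerivWithin_le hderiv hbound
    (left_mem_Icc.2 (by linarith)) (right_mem_Icc.2 (by linarith))
  rw [sub_sub_cancel, norm_one, mul_one, Real.norm_eq_abs] at h
  rw [posRpowDiff, posRpow_of_pos (by linarith), posRpow_of_pos (by linarith)]
  convert h using 2
  ring

lemma crossCorr_indicator (k f : ℝ → ℝ) {S : Set ℝ} (hS : MeasurableSet S) (x : ℝ) :
    crossCorr k (S.indicator f) x = ∫ z in S, k (z - x) * f z := by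
  rw [crossCorr, ← integral_sub_right_eq_self _ x, ← integral_indicator hS]
  congr with z
  by_cases hz : z ∈ S <;> simp [hz]

lemma measurable_indicator_inv {S : Set ℝ} (hS : MeasurableSet S) :
    Measurable (S.indicator (·⁻¹)) :=
  Measurable.indicator (by fun_prop) hS

lemma abs_indicator_Ioi_inv_le {w : ℝ} (hw : 0 < w) (x : ℝ) :
    |(Ioi w).indicator (·⁻¹) x| ≤ w⁻¹ := by
  by_cases hx : x ∈ Ioi w
  · rw [indicator_of_mem hx, abs_inv]
    exact inv_anti₀ hw ((le_of_lt hx).trans (le_abs_self x))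
  · rw [indicator_of_notMem hx, abs_zero]
    positivity

variable {Y : ℝ}

lemma abs_posRpowDiff_mul_inv_sub_le (hY : 1 < Y) {x z : ℝ} (hz : 4 ≤ z) (hx : x ≤ z / 2) :
    |posRpowDiff (1 - Y) (z - x) * z⁻¹ - (1 - Y) * z ^ (-Y - 1)| ≤
      (Y - 1) * Y * 4 ^ (Y + 1) * (1 + |x|) * z ^ (-Y - 2) := by
  have hz₀ : 0 < z := by linarith
  have hfactor : posRpowDiff (1 - Y) (z - x) * z⁻¹ - (1 - Y) * z ^ (-Y - 1) =
      (posRpowDiff (1 - Y) (z - x) - (1 - Y) * z ^ (1 - Y - 1)) * z⁻¹ := by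
    rw [Real.rpow_sub_one hz₀.ne', sub_sub_cancel_left]
    ring
  have hquarter : (z / 4) ^ (1 - Y - 2) = 4 ^ (Y + 1) * z ^ (-Y - 1) := by
    rw [show 1 - Y - 2 = -(Y + 1) by ring, Real.rpow_neg (by positivity),
      Real.div_rpow hz₀.le (by norm_num), inv_div, div_eq_mul_inv, ← Real.rpow_neg hz₀.le]
    ring_nf
  have h := abs_posRpowDiff_sub_le (p := 1 - Y) (s := z - x) (z := z) (m := z / 4)
    (by linarith) (by linarith) (by linarith) (by linarith)
  rw [hquarter, abs_of_neg (by linarith : 1 - Y < 0), sub_sub_cancel_left, sub_sub_cancel_left,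
    abs_neg, abs_neg, abs_of_pos (by linarith : 0 < Y)] at h
  rw [hfactor, abs_mul, abs_of_pos (inv_pos.2 hz₀), sub_sub_cancel_left,
    show -Y - 2 = -Y - 1 - 1 by ring, Real.rpow_sub_one hz₀.ne' (-Y - 1), div_eq_mul_inv]
  refine (mul_le_mul_of_nonneg_right h (inv_pos.2 hz₀).le).trans_eq ?_
  ring

lemma abs_crossCorr_indicator_Ioi_inv_sub_le (hY : Y ∈ Ioo 1 2) {w x : ℝ} (hw : 4 ≤ w)
    (hx : x ≤ w / 2) :
    |crossCorr (posRpowDiff (1 - Y)) ((Ioi w).indicator (·⁻¹)) x - (1 - Y) / Y * w ^ (-Y)| ≤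
      (Y - 1) * Y * 4 ^ (Y + 1) * (1 + |x|) * (w ^ (-Y - 1) / (Y + 1)) := by
  obtain ⟨hY₁, hY₂⟩ := hY
  have hw₀ : 0 < w := by linarith
  have hpow {q : ℝ} (hq : q < -1) (c : ℝ) : IntegrableOn (fun z => c * z ^ q) (Ioi w) :=
    (integrableOn_Ioi_rpow_of_lt hq hw₀).const_mul c
  have hcorr : IntegrableOn (fun z => posRpowDiff (1 - Y) (z - x) * z⁻¹) (Ioi w) := by
    refine ((integrable_posRpowDiff ⟨by linarith, by linarith⟩).comp_sub_right
      x).integrableOn.mul_bdd (c := w⁻¹) (by fun_prop) ?_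
    filter_upwards [self_mem_ae_restrict measurableSet_Ioi] with z (hz : w < z)
    rw [norm_inv, Real.norm_of_nonneg (hw₀.trans hz).le]
    exact inv_anti₀ hw₀ hz.le
  have hmain : (1 - Y) / Y * w ^ (-Y) = ∫ z in Ioi w, (1 - Y) * z ^ (-Y - 1) := by
    rw [integral_const_mul, integral_Ioi_rpow_of_lt (by linarith) hw₀, sub_add_cancel]
    field_simp
  have hrem : ∫ z in Ioi w, z ^ (-Y - 2) = w ^ (-Y - 1) / (Y + 1) := by
    rw [integral_Ioi_rpow_of_lt (by linarith) hw₀, show -Y - 2 + 1 = -(Y + 1) by ring,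
      neg_div_neg_eq, neg_add']
  rw [crossCorr_indicator _ _ measurableSet_Ioi, hmain,
    ← integral_sub hcorr (hpow (by linarith) _), ← hrem, ← integral_const_mul]
  rw [← Real.norm_eq_abs]
  refine norm_integral_le_of_norm_le (hpow (by linarith : -Y - 2 < -1) _) ?_
  filter_upwards [self_mem_ae_restrict measurableSet_Ioi] with z (hz : w < z)
  exact abs_posRpowDiff_mul_inv_sub_le hY₁ (hw.trans hz.le) (by linarith)

lemma abs_crossCorr_indicator_Ioi_inv_sub_le_inv (hY : Y ∈ Ioo 1 2) {w : ℝ} (hw : 1 ≤ w) (x : ℝ) :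
    |crossCorr (posRpowDiff (1 - Y)) ((Ioi w).indicator (·⁻¹)) x - (1 - Y) / Y * w ^ (-Y)| ≤
      ((∫ s, |posRpowDiff (1 - Y) s|) + 1) * w⁻¹ := by
  obtain ⟨hY₁, hY₂⟩ := hY
  have hcorr := abs_crossCorr_le (x := x)
    (integrable_posRpowDiff (p := 1 - Y) ⟨by linarith, by linarith⟩)
    fun s _ => abs_indicator_Ioi_inv_le (one_pos.trans_le hw) (x + s)
  have hfrac : |(1 - Y) / Y| ≤ 1 := by
    rw [abs_div, abs_of_pos (by linarith : 0 < Y), div_le_one (by linarith)]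
    exact abs_le.2 ⟨by linarith, by linarith⟩
  have hpow : |(1 - Y) / Y * w ^ (-Y)| ≤ w⁻¹ := by
    rw [abs_mul, abs_of_nonneg (by positivity : 0 ≤ w ^ (-Y)), ← Real.rpow_neg_one]
    exact (mul_le_of_le_one_left (by positivity) hfrac).trans
      (Real.rpow_le_rpow_of_exponent_le hw (by linarith))
  linarith [abs_sub (crossCorr (posRpowDiff (1 - Y)) ((Ioi w).indicator (·⁻¹)) x)
    ((1 - Y) / Y * w ^ (-Y))]

variable {μ : Measure ℝ} [IsProbabilityMeasure μ]

lemma abs_integral_sub_le_of_forall_le {f : ℝ → ℝ} {L a b r : ℝ} (hid : Integrable id μ)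
    (hf : Measurable f) (ha : 0 ≤ a) (hfar : ∀ x, |f x - L| ≤ b)
    (hnear : ∀ x ≤ r, |f x - L| ≤ a * (1 + |x|)) :
    |∫ x, f x ∂μ - L| ≤ a * (1 + ∫ x, |x| ∂μ) + b * μ.real {x | r < |x|} := by
  have hS : MeasurableSet {x : ℝ | r < |x|} := measurableSet_lt measurable_const (by fun_prop)
  have hint : Integrable (fun x : ℝ => a * (1 + |x|)) μ :=
    ((integrable_const 1).add hid.abs).const_mul a
  have hintS : Integrable ({x : ℝ | r < |x|}.indicator fun _ => b) μ :=
    (integrable_const b).indicator hS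
  have hsub : Integrable (fun x => f x - L) μ :=
    .of_bound (by fun_prop) b (ae_of_all _ hfar)
  have hpt (x : ℝ) : ‖f x - L‖ ≤ a * (1 + |x|) + {x : ℝ | r < |x|}.indicator (fun _ => b) x := by
    by_cases hx : r < |x|
    · rw [indicator_of_mem (show x ∈ {x : ℝ | r < |x|} from hx)]
      exact (hfar x).trans (le_add_of_nonneg_left (by positivity))
    · rw [indicator_of_notMem (show x ∉ {x : ℝ | r < |x|} from hx), add_zero]
      exact hnear x ((le_abs_self x).trans (not_lt.1 hx))
  have h := norm_integral_le_of_norm_le (hint.add hintS) (ae_of_all _ hpt)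
  have hfint : Integrable f μ := (integrable_add_const_iff (c := -L)).1 hsub
  rw [integral_sub hfint (integrable_const L), integral_const, probReal_univ, one_smul,
    Real.norm_eq_abs] at h
  refine h.trans_eq ?_
  rw [integral_add' hint hintS, integral_const_mul, integral_indicator_const b hS, smul_eq_mul,
    mul_comm b]
  congr
  simpa using integral_add (μ := μ) (integrable_const (1 : ℝ)) hid.abs

lemma isBigO_integral_crossCorr_indicator_Ioi_inv (hY : Y ∈ Ioo 1 2) (hid : Integrable id μ)
    (htail : (fun r => μ.real {x | r < |x|}) =O[atTop] fun r => r ^ (-Y)) :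
    (fun w => ∫ x, crossCorr (posRpowDiff (1 - Y)) ((Ioi w).indicator (·⁻¹)) x ∂μ -
      (1 - Y) / Y * w ^ (-Y)) =O[atTop] fun w => w ^ (-Y - 1) := by
  obtain ⟨hY₁, hY₂⟩ := hY
  set N := ∫ s, |posRpowDiff (1 - Y) s|
  set E := ∫ x, |x| ∂μ
  have hmaj : (fun w : ℝ => (Y - 1) * Y * 4 ^ (Y + 1) / (Y + 1) * (1 + E) * w ^ (-Y - 1) +
      (N + 1) * w⁻¹ * μ.real {x | 2⁻¹ * w < |x|}) =O[atTop] fun w => w ^ (-Y - 1) := by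
    refine (isBigO_const_mul_self _ _ _).add ?_
    refine (((isBigO_const_mul_self (N + 1) (fun w : ℝ => w⁻¹) atTop).mul
      (isBigO_comp_const_mul htail (c := 2⁻¹) (by norm_num)))).congr' .rfl ?_
    filter_upwards [eventually_gt_atTop 0] with w hw
    rw [Real.rpow_sub_one hw.ne']
    ring
  refine IsBigO.trans (.of_bound 1 ?_) hmaj
  filter_upwards [eventually_ge_atTop 4] with w hw
  have h := abs_integral_sub_le_of_forall_le (r := 2⁻¹ * w)
    (a := (Y - 1) * Y * 4 ^ (Y + 1) / (Y + 1) * w ^ (-Y - 1)) hid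
    (measurable_crossCorr measurable_posRpowDiff (measurable_indicator_inv measurableSet_Ioi))
    (by have := sub_pos.2 hY₁; positivity)
    (abs_crossCorr_indicator_Ioi_inv_sub_le_inv ⟨hY₁, hY₂⟩ (by linarith)) fun x hx =>
      (abs_crossCorr_indicator_Ioi_inv_sub_le ⟨hY₁, hY₂⟩ hw (by linarith)).trans_eq (by ring)
  rw [one_mul]
  refine (h.trans_eq ?_).trans (le_abs_self _)
  ring

lemma mul_crossCorr_posRpowDiff_zero_mem_Icc {g : ℝ → ℝ} {B x l u : ℝ} (hg : Measurable g)
    (hB : ∀ x, |g x| ≤ B) (hmem : ∀ s ∈ Ioc (0 : ℝ) 1, x * g (x + s) ∈ Icc l u) :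
    x * crossCorr (posRpowDiff 0) g x ∈ Icc l u := by
  have : IsProbabilityMeasure (volume.restrict (Ioc (0 : ℝ) 1)) := ⟨by simp⟩
  have hcorr : x * crossCorr (posRpowDiff 0) g x = ∫ s in Ioc (0 : ℝ) 1, x * g (x + s) := by
    rw [crossCorr, integral_const_mul, ← integral_indicator measurableSet_Ioc]
    congr with s
    rw [posRpowDiff_zero]
    by_cases hs : s ∈ Ioc (0 : ℝ) 1 <;> simp [hs]
  rw [hcorr]
  refine (convex_Icc l u).integral_mem isClosed_Icc
    ((ae_restrict_iff' measurableSet_Ioc).2 (ae_of_all _ hmem)) (Integrable.const_mul ?_ x)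
  exact .of_bound (hg.comp (measurable_const_add x)).aestronglyMeasurable B
    (ae_of_all _ fun s => hB (x + s))

lemma mul_indicator_Ioi_inv_add_mem_Icc {w x s : ℝ} (hw : 1 ≤ w) (hs : s ∈ Ioc (0 : ℝ) 1) :
    x * (Ioi w).indicator (·⁻¹) (x + s) ∈
      Icc ((Ici w).indicator (fun _ => 1 - w⁻¹) x) ((Ici (w - 1)).indicator 1 x) := by
  rcases le_or_gt (x + s) w with hx | hx
  · have hxw : x ∉ Ici w := notMem_Ici.2 (by linarith [hs.1])
    rw [indicator_of_notMem (notMem_Ioi.2 hx), indicator_of_notMem hxw, mul_zero]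
    exact ⟨le_rfl, indicator_nonneg (fun _ _ => zero_le_one) x⟩
  · have hxw : x ∈ Ici (w - 1) := mem_Ici.2 (by linarith [hs.2])
    have hx₀ : 0 ≤ x := by linarith [mem_Ici.1 hxw]
    rw [indicator_of_mem (mem_Ioi.2 hx), indicator_of_mem hxw, ← div_eq_mul_inv]
    refine ⟨?_, (div_le_one (by linarith)).2 (by linarith [hs.1])⟩
    by_cases h : x ∈ Ici w
    · have hs₁ : s / (x + s) ≤ w⁻¹ := by
        rw [← one_div]
        exact div_le_div₀ zero_le_one hs.2 (by linarith) hx.le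
      have hsum : x / (x + s) + s / (x + s) = 1 := by
        rw [← add_div, div_self (by linarith)]
      rw [indicator_of_mem h]
      linarith
    · rw [indicator_of_notMem h]
      exact div_nonneg hx₀ (by linarith)

lemma integral_mul_crossCorr_indicator_Ioi_inv_mem_Icc {w : ℝ} (hw : 1 ≤ w)
    (hid : Integrable id μ) :
    ∫ x, x * crossCorr (posRpowDiff 0) ((Ioi w).indicator (·⁻¹)) x ∂μ ∈
      Icc ((1 - w⁻¹) * μ.real (Ici w)) (μ.real (Ici (w - 1))) := by
  have hg := measurable_indicator_inv (measurableSet_Ioi (a := w))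
  have hB := abs_indicator_Ioi_inv_le (one_pos.trans_le hw)
  have hpt (x : ℝ) := mul_crossCorr_posRpowDiff_zero_mem_Icc hg hB fun s hs =>
    mul_indicator_Ioi_inv_add_mem_Icc (x := x) hw hs
  have hint : Integrable
      (fun x => x * crossCorr (posRpowDiff 0) ((Ioi w).indicator (·⁻¹)) x) μ :=
    hid.mul_bdd (c := (∫ s, |posRpowDiff 0 s|) * w⁻¹)
      (measurable_crossCorr measurable_posRpowDiff hg).aestronglyMeasurable
      (ae_of_all _ fun x => abs_crossCorr_le
        (integrable_posRpowDiff ⟨by norm_num, le_rfl⟩) fun s _ => hB (x + s))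
  have hlower := integral_mono ((integrable_const (1 - w⁻¹)).indicator measurableSet_Ici) hint
    fun x => (hpt x).1
  have hupper := integral_mono hint ((integrable_const (1 : ℝ)).indicator measurableSet_Ici)
    fun x => (hpt x).2
  rw [integral_indicator_const _ measurableSet_Ici, smul_eq_mul] at hlower hupper
  exact ⟨by linarith, by linarith⟩

lemma isBigO_measureReal_Ici_of_abs
    (htail : (fun r => μ.real {x | r < |x|}) =O[atTop] fun r => r ^ (-Y)) :
    (fun w => μ.real (Ici w)) =O[atTop] fun w => w ^ (-Y) := by
  refine IsBigO.trans (.of_bound 1 ?_) (isBigO_comp_const_mul htail (c := 2⁻¹) (by norm_num))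
  filter_upwards [eventually_gt_atTop 0] with w hw
  rw [one_mul, Real.norm_of_nonneg measureReal_nonneg, Real.norm_of_nonneg measureReal_nonneg]
  exact measureReal_mono fun x (hx : w ≤ x) =>
    show 2⁻¹ * w < |x| by linarith [le_abs_self x]

lemma IsSpectrallyPositiveStable.isBigO_measureReal_Ici_sub {C : ℝ}
    (h : IsSpectrallyPositiveStable μ Y C) (hY : Y ∈ Ioo 1 2) :
    (fun w => μ.real (Ici w) - C / Y * w ^ (-Y)) =O[atTop] fun w => w ^ (-Y - 1) := by
  have hY₁ : 0 < Y - 1 := sub_pos.2 hY.1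
  have hY₀ : 0 < Y := by linarith
  have hid := h.integrable_id hY.1
  have htail := h.measureReal_abs_gt_isBigO hY₀.le
  set Φ : ℝ → ℝ := fun w =>
    ∫ x, x * crossCorr (posRpowDiff 0) ((Ioi w).indicator (·⁻¹)) x ∂μ
  have hΦ : (fun w => Φ w - C / Y * w ^ (-Y)) =O[atTop] fun w => w ^ (-Y - 1) := by
    refine ((isBigO_integral_crossCorr_indicator_Ioi_inv hY hid htail).const_mul_left
      (-(C / (Y - 1)))).congr' ?_ .rfl
    filter_upwards [eventually_gt_atTop 0] with w hw
    have hstein : Φ w = _ := h.integral_id_mul_crossCorr hY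
      (measurable_indicator_inv measurableSet_Ioi) (abs_indicator_Ioi_inv_le hw)
    rw [hstein]
    field_simp
    ring
  have hmean : (fun w => w⁻¹ * μ.real (Ici w)) =O[atTop] fun w => w ^ (-Y - 1) := by
    refine ((isBigO_refl (fun w : ℝ => w⁻¹) atTop).mul (isBigO_measureReal_Ici_of_abs htail)).congr'
      .rfl ?_
    filter_upwards [eventually_gt_atTop 0] with w hw
    rw [Real.rpow_sub_one hw.ne', div_eq_inv_mul]
  have hshift := (isBigO_comp_add_one hΦ (by linarith)).add
    ((isBigO_add_one_rpow_sub_rpow (p := -Y) (by linarith)).const_mul_left (C / Y))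
  refine isBigO_of_le_of_le hshift (hΦ.add hmean) ?_ ?_
  all_goals filter_upwards [eventually_ge_atTop 1] with w hw
  · have hupper := (integral_mul_crossCorr_indicator_Ioi_inv_mem_Icc (μ := μ) (w := w + 1)
      (by linarith) hid).2
    rw [add_sub_cancel_right] at hupper
    linarith
  · linarith [(integral_mul_crossCorr_indicator_Ioi_inv_mem_Icc hw hid).1]

end RightTail

section LeftTail

lemma abs_indicator_Iic_neg_inv_le {w : ℝ} (hw : 0 < w) (x : ℝ) :
    |(Iic (-w)).indicator (·⁻¹) x| ≤ w⁻¹ := by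
  by_cases hx : x ∈ Iic (-w)
  · rw [indicator_of_mem hx, abs_inv]
    exact inv_anti₀ hw ((le_neg_of_le_neg hx).trans (neg_le_abs x))
  · rw [indicator_of_notMem hx, abs_zero]
    positivity

lemma mul_indicator_Iic_neg_inv_add_mem_Icc {w x s : ℝ} (hw : 0 < w) (hs : s ∈ Ioc (0 : ℝ) 1) :
    x * (Iic (-w)).indicator (·⁻¹) (x + s) ∈
      Icc ((Iic (-(w + 1))).indicator 1 x) (|x| * w⁻¹) := by
  constructor
  · rcases le_or_gt (x + s) (-w) with hx | hx
    · rw [indicator_of_mem (mem_Iic.2 hx), ← div_eq_mul_inv]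
      exact (indicator_le_self' (fun _ _ => zero_le_one) x).trans
        ((one_le_div_of_neg (by linarith)).2 (by linarith [hs.1]))
    · rw [indicator_of_notMem (notMem_Iic.2 hx), mul_zero,
        indicator_of_notMem (notMem_Iic.2 (by linarith [hs.2]))]
  · refine (le_abs_self _).trans ?_
    rw [abs_mul]
    gcongr
    exact abs_indicator_Iic_neg_inv_le hw _

variable {μ : Measure ℝ} [IsProbabilityMeasure μ] {Y C : ℝ}

lemma measureReal_Iic_le_integral_mul_crossCorr {w : ℝ} (hw : 0 < w) (hid : Integrable id μ) :
    μ.real (Iic (-(w + 1))) ≤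
      ∫ x, x * crossCorr (posRpowDiff 0) ((Iic (-w)).indicator (·⁻¹)) x ∂μ := by
  have hg := measurable_indicator_inv (measurableSet_Iic (a := -w))
  have hB := abs_indicator_Iic_neg_inv_le hw
  have hint : Integrable
      (fun x => x * crossCorr (posRpowDiff 0) ((Iic (-w)).indicator (·⁻¹)) x) μ :=
    hid.mul_bdd (c := (∫ s, |posRpowDiff 0 s|) * w⁻¹)
      (measurable_crossCorr measurable_posRpowDiff hg).aestronglyMeasurable
      (ae_of_all _ fun x => abs_crossCorr_le
        (integrable_posRpowDiff ⟨by norm_num, le_rfl⟩) fun s _ => hB (x + s))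
  have h := integral_mono ((integrable_const (1 : ℝ)).indicator measurableSet_Iic) hint
    fun x => (mul_crossCorr_posRpowDiff_zero_mem_Icc hg hB fun s hs =>
      mul_indicator_Iic_neg_inv_add_mem_Icc (x := x) hw hs).1
  rwa [integral_indicator_const _ measurableSet_Iic, smul_eq_mul, mul_one] at h

/-- The kernel vanishes on the negative half-line, so that only the points of `Iic (-w)` can be
shifted to the right into `Iic (-w)`. -/
lemma abs_integral_crossCorr_indicator_Iic_inv_le {w : ℝ} (hw : 0 < w) (hY : Y ∈ Ioo 1 2) :
    |∫ x, crossCorr (posRpowDiff (1 - Y)) ((Iic (-w)).indicator (·⁻¹)) x ∂μ| ≤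
      (∫ s, |posRpowDiff (1 - Y) s|) * w⁻¹ * μ.real (Iic (-w)) := by
  have hpt (x : ℝ) : ‖crossCorr (posRpowDiff (1 - Y)) ((Iic (-w)).indicator (·⁻¹)) x‖ ≤
      (∫ s, |posRpowDiff (1 - Y) s|) * (Iic (-w)).indicator (fun _ => w⁻¹) x := by
    refine abs_crossCorr_le (integrable_posRpowDiff ⟨by linarith [hY.2], by linarith [hY.1]⟩)
      fun s hs => ?_
    have hs₀ : 0 < s := not_le.1 fun h => hs (posRpowDiff_of_nonpos h)
    by_cases hx : x ∈ Iic (-w)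
    · rw [indicator_of_mem hx fun _ => w⁻¹]
      exact abs_indicator_Iic_neg_inv_le hw _
    · rw [indicator_of_notMem hx, indicator_of_notMem, abs_zero]
      exact notMem_Iic.2 (by linarith [notMem_Iic.1 hx])
  have h := norm_integral_le_of_norm_le
    (((integrable_const w⁻¹).indicator measurableSet_Iic).const_mul _) (ae_of_all μ hpt)
  rw [integral_const_mul, integral_indicator_const _ measurableSet_Iic, smul_eq_mul,
    mul_comm (μ.real _), ← mul_assoc] at h
  exact h

lemma isBigO_measureReal_Iic_neg_of_abs
    (htail : (fun r => μ.real {x | r < |x|}) =O[atTop] fun r => r ^ (-Y)) :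
    (fun w => μ.real (Iic (-w))) =O[atTop] fun w => w ^ (-Y) := by
  refine IsBigO.trans (.of_bound 1 ?_) (isBigO_comp_const_mul htail (c := 2⁻¹) (by norm_num))
  filter_upwards [eventually_gt_atTop 0] with w hw
  rw [one_mul, Real.norm_of_nonneg measureReal_nonneg, Real.norm_of_nonneg measureReal_nonneg]
  exact measureReal_mono fun x (hx : x ≤ -w) =>
    show 2⁻¹ * w < |x| by linarith [neg_le_abs x]

lemma IsSpectrallyPositiveStable.isBigO_measureReal_Iic_neg
    (h : IsSpectrallyPositiveStable μ Y C) (hY : Y ∈ Ioo 1 2) :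
    (fun w => μ.real (Iic (-w))) =O[atTop] fun w => w ^ (-Y - 1) := by
  set K := |C / (Y - 1)| * ∫ s, |posRpowDiff (1 - Y) s|
  have hbound : (fun w => K * (w⁻¹ * μ.real (Iic (-w)))) =O[atTop] fun w => w ^ (-Y - 1) := by
    refine (((isBigO_refl (fun w : ℝ => w⁻¹) atTop).mul (isBigO_measureReal_Iic_neg_of_abs
      (h.measureReal_abs_gt_isBigO (by linarith [hY.1])))).const_mul_left K).congr' .rfl ?_
    filter_upwards [eventually_gt_atTop 0] with w hw
    rw [Real.rpow_sub_one hw.ne', div_eq_inv_mul]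
  refine IsBigO.trans (.of_bound 1 ?_) (isBigO_comp_const_mul hbound (c := 2⁻¹) (by norm_num))
  filter_upwards [eventually_ge_atTop 2] with w hw
  have hw₂ : 0 < 2⁻¹ * w := by linarith
  have hstein := h.integral_id_mul_crossCorr hY
    (measurable_indicator_inv (measurableSet_Iic (a := -(2⁻¹ * w))))
    (abs_indicator_Iic_neg_inv_le hw₂)
  rw [one_mul, Real.norm_of_nonneg measureReal_nonneg]
  calc μ.real (Iic (-w)) ≤ μ.real (Iic (-(2⁻¹ * w + 1))) :=
        measureReal_mono (Iic_subset_Iic.2 (by linarith))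
    _ ≤ -(C / (Y - 1)) *
        ∫ x, crossCorr (posRpowDiff (1 - Y)) ((Iic (-(2⁻¹ * w))).indicator (·⁻¹)) x ∂μ :=
      (measureReal_Iic_le_integral_mul_crossCorr hw₂ (h.integrable_id hY.1)).trans_eq hstein
    _ ≤ |C / (Y - 1)| *
        |∫ x, crossCorr (posRpowDiff (1 - Y)) ((Iic (-(2⁻¹ * w))).indicator (·⁻¹)) x ∂μ| := by
      rw [← abs_neg (C / (Y - 1)), ← abs_mul]
      exact le_abs_self _
    _ ≤ |C / (Y - 1)| *
        ((∫ s, |posRpowDiff (1 - Y) s|) * (2⁻¹ * w)⁻¹ * μ.real (Iic (-(2⁻¹ * w)))) := by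
      gcongr
      exact abs_integral_crossCorr_indicator_Iic_inv_le hw₂ hY
    _ = K * ((2⁻¹ * w)⁻¹ * μ.real (Iic (-(2⁻¹ * w)))) := by ring
    _ ≤ _ := Real.le_norm_self _

end LeftTail

section ParetoTail

/-- The right tail of `μ` is `c * w ^ (-Y)` and its left tail vanishes, both up to an error of
order `w ^ (-Y - 1)`. -/
structure HasParetoTail (μ : Measure ℝ) (Y c : ℝ) : Prop where
  isBigO_Ici_sub : (fun w => μ.real (Ici w) - c * w ^ (-Y)) =O[atTop] fun w => w ^ (-Y - 1)
  isBigO_Iic_neg : (fun w => μ.real (Iic (-w))) =O[atTop] fun w => w ^ (-Y - 1)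

variable {μ : Measure ℝ} {Y c : ℝ}

theorem IsSpectrallyPositiveStable.hasParetoTail [IsProbabilityMeasure μ] {C : ℝ}
    (h : IsSpectrallyPositiveStable μ Y C) (hY : Y ∈ Ioo 1 2) : HasParetoTail μ Y (C / Y) :=
  ⟨h.isBigO_measureReal_Ici_sub hY, h.isBigO_measureReal_Iic_neg hY⟩

lemma isBigO_rpow_of_le {p q : ℝ} (hpq : p ≤ q) :
    (fun w : ℝ => w ^ p) =O[atTop] fun w => w ^ q := by
  refine .of_bound 1 ?_
  filter_upwards [eventually_ge_atTop 1] with w hw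
  rw [one_mul, Real.norm_of_nonneg (by positivity), Real.norm_of_nonneg (by positivity)]
  exact Real.rpow_le_rpow_of_exponent_le hw hpq

lemma HasParetoTail.isBigO_Ici (h : HasParetoTail μ Y c) :
    (fun w => μ.real (Ici w)) =O[atTop] fun w => w ^ (-Y) := by
  refine ((h.isBigO_Ici_sub.trans (isBigO_rpow_of_le (by linarith))).add
    (isBigO_const_mul_self c _ atTop)).congr_left fun w => ?_
  exact sub_add_cancel _ _

lemma HasParetoTail.integrable_id [IsFiniteMeasure μ] (h : HasParetoTail μ Y c) (hY : 1 < Y) :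
    Integrable id μ := by
  refine integrable_of_measureReal_abs_gt_isBigO aemeasurable_id hY (IsBigO.trans (.of_bound 1 ?_)
    (h.isBigO_Ici.add (h.isBigO_Iic_neg.trans (isBigO_rpow_of_le (by linarith)))))
  refine .of_forall fun w => ?_
  rw [one_mul, Real.norm_of_nonneg measureReal_nonneg,
    Real.norm_of_nonneg (add_nonneg measureReal_nonneg measureReal_nonneg)]
  refine (measureReal_mono fun x (hx : w < |x|) => ?_).trans (measureReal_union_le _ _)
  exact (lt_abs.1 hx).imp le_of_lt fun hx => by simpa using (le_neg_of_le_neg hx.le)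

lemma HasParetoTail.isBigO_const_mul_sub (h : HasParetoTail μ Y c) {a : ℝ} (ha : 0 < a) :
    (fun w => μ.real {u | w ≤ a * u} - c * a ^ Y * w ^ (-Y)) =O[atTop]
      fun w => w ^ (-Y - 1) := by
  refine (isBigO_comp_const_mul h.isBigO_Ici_sub (inv_pos.2 ha)).congr' ?_ .rfl
  filter_upwards [eventually_ge_atTop 0] with w hw
  have hset : Ici (a⁻¹ * w) = {u | w ≤ a * u} := by
    ext u
    exact inv_mul_le_iff₀ ha
  rw [hset, Real.mul_rpow (inv_nonneg.2 ha.le) hw, Real.inv_rpow ha.le, Real.rpow_neg ha.le,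
    inv_inv, mul_assoc]

end ParetoTail

section OneBigJump

variable {μ ν : Measure ℝ} {Y c : ℝ}

lemma exists_abs_sub_rpow_le_of_isBigO {T : ℝ → ℝ} (hY : 0 ≤ Y)
    (hT : (fun w => T w - c * w ^ (-Y)) =O[atTop] fun w => w ^ (-Y - 1)) :
    ∃ D, 0 ≤ D ∧ ∀ᶠ w in atTop, ∀ t ≥ w / 2,
      |T t - c * w ^ (-Y)| ≤ D * (1 + |t - w|) * w ^ (-Y - 1) := by
  obtain ⟨K, hK, hKT⟩ := hT.exists_nonneg
  refine ⟨(K + |c| * Y) * 2⁻¹ ^ (-Y - 1), by positivity, ?_⟩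
  filter_upwards [(tendsto_id.atTop_div_const two_pos).eventually
    (eventually_forall_ge_atTop.2 hKT.bound), eventually_gt_atTop 0] with w hw hw₀ t ht
  have hhalf : (w / 2) ^ (-Y - 1) = 2⁻¹ ^ (-Y - 1) * w ^ (-Y - 1) := by
    rw [div_eq_inv_mul, Real.mul_rpow (by norm_num) hw₀.le]
  have hnear : |T t - c * t ^ (-Y)| ≤ K * (w / 2) ^ (-Y - 1) := by
    refine (hw t ht).trans ?_
    rw [Real.norm_of_nonneg (Real.rpow_nonneg (by linarith) _)]
    exact mul_le_mul_of_nonneg_left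
      (Real.rpow_le_rpow_of_nonpos (by linarith) ht (by linarith)) hK
  have hshift := abs_rpow_sub_rpow_le (p := -Y) (by linarith) (half_pos hw₀) ht
    (half_le_self hw₀.le)
  rw [abs_neg, abs_of_nonneg hY] at hshift
  calc |T t - c * w ^ (-Y)| ≤ |T t - c * t ^ (-Y)| + |c| * |t ^ (-Y) - w ^ (-Y)| := by
        rw [← abs_mul, mul_sub]
        exact abs_sub_le _ _ _
    _ ≤ K * (w / 2) ^ (-Y - 1) + |c| * (Y * (w / 2) ^ (-Y - 1) * |t - w|) := by gcongr
    _ ≤ (K + |c| * Y) * (w / 2) ^ (-Y - 1) * (1 + |t - w|) := by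
      have : 0 ≤ (w / 2) ^ (-Y - 1) := by positivity
      nlinarith [mul_nonneg (mul_nonneg hK this) (abs_nonneg (t - w)),
        mul_nonneg (mul_nonneg (abs_nonneg c) hY) this]
    _ = _ := by rw [hhalf]; ring

/-- The event that `a * u + b * v` exceeds `w` because of `u` alone, the variable `v` being at most
`δ * w` in absolute value. -/
def bigJump (a b δ w : ℝ) : Set (ℝ × ℝ) := {p | w ≤ a * p.1 + b * p.2 ∧ |p.2| ≤ δ * w}

lemma measurableSet_bigJump {a b δ w : ℝ} : MeasurableSet (bigJump a b δ w) := by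
  unfold bigJump
  measurability

lemma mk_preimage_bigJump {a b δ w v : ℝ} (hv : |v| ≤ δ * w) :
    (fun u => (u, v)) ⁻¹' bigJump a b δ w = {u | w - b * v ≤ a * u} := by
  ext u
  exact (and_iff_left hv).trans sub_le_iff_le_add.symm

lemma mk_preimage_bigJump_of_lt {a b δ w v : ℝ} (hv : δ * w < |v|) :
    (fun u => (u, v)) ⁻¹' bigJump a b δ w = ∅ :=
  eq_empty_of_forall_notMem fun _ hu => hv.not_ge hu.2

lemma exists_abs_measureReal_mk_preimage_bigJump_sub_le (h : HasParetoTail μ Y c) (hY : 0 ≤ Y)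
    {a b δ : ℝ} (ha : 0 < a) (hδ : 0 < δ) (hb : |b| * δ ≤ 2⁻¹) :
    ∃ D, ∀ᶠ w in atTop, ∀ v,
      |μ.real ((fun u => (u, v)) ⁻¹' bigJump a b δ w) - c * a ^ Y * w ^ (-Y)| ≤
        D * w ^ (-Y - 1) * (1 + |v|) := by
  obtain ⟨D, hD, hbound⟩ := exists_abs_sub_rpow_le_of_isBigO hY (h.isBigO_const_mul_sub ha)
  set κ := c * a ^ Y
  refine ⟨D * (1 + |b|) + |κ| * δ⁻¹, ?_⟩
  filter_upwards [hbound, eventually_gt_atTop 0] with w hw hw₀ v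
  rcases le_or_gt |v| (δ * w) with hv | hv
  · have hbv : |b * v| ≤ w / 2 := by
      rw [abs_mul]
      nlinarith [mul_le_mul_of_nonneg_left hv (abs_nonneg b)]
    rw [mk_preimage_bigJump hv]
    calc _ ≤ D * (1 + |w - b * v - w|) * w ^ (-Y - 1) :=
          hw _ (by linarith [le_abs_self (b * v)])
      _ = D * w ^ (-Y - 1) * (1 + |b| * |v|) := by
        rw [sub_sub_cancel_left, abs_neg, abs_mul]
        ring
      _ ≤ D * w ^ (-Y - 1) * ((1 + |b|) * (1 + |v|)) := by
        gcongr
        nlinarith [abs_nonneg b, abs_nonneg v]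
      _ ≤ _ := by
        have : 0 ≤ |κ| * δ⁻¹ * w ^ (-Y - 1) * (1 + |v|) := by positivity
        linarith
  · have hwv : w ≤ δ⁻¹ * (1 + |v|) := by
      rw [← div_eq_inv_mul, le_div_iff₀ hδ]
      linarith
    rw [mk_preimage_bigJump_of_lt hv, measureReal_empty, zero_sub, abs_neg, abs_mul,
      abs_of_nonneg (Real.rpow_nonneg hw₀.le (-Y))]
    calc |κ| * w ^ (-Y) = |κ| * (w * w ^ (-Y - 1)) := by
          rw [Real.rpow_sub_one hw₀.ne', mul_div_cancel₀ _ hw₀.ne']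
      _ ≤ |κ| * (δ⁻¹ * (1 + |v|) * w ^ (-Y - 1)) := by gcongr
      _ ≤ _ := by
        have : 0 ≤ D * (1 + |b|) * w ^ (-Y - 1) * (1 + |v|) := by positivity
        linarith

lemma measureReal_prod_eq_integral [IsFiniteMeasure μ] [SFinite ν] {S : Set (ℝ × ℝ)}
    (hS : MeasurableSet S) :
    (μ.prod ν).real S = ∫ v, μ.real ((fun u => (u, v)) ⁻¹' S) ∂ν := by
  simp only [measureReal_def]
  rw [Measure.prod_apply_symm hS,
    integral_toReal (measurable_measure_prodMk_right hS).aemeasurable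
      (ae_of_all _ fun _ => measure_lt_top _ _)]

lemma isBigO_measureReal_bigJump_sub [IsFiniteMeasure μ] [IsProbabilityMeasure ν]
    (h : HasParetoTail μ Y c) (hY : 0 ≤ Y) (hid : Integrable id ν) {a b δ : ℝ} (ha : 0 < a)
    (hδ : 0 < δ) (hb : |b| * δ ≤ 2⁻¹) :
    (fun w => (μ.prod ν).real (bigJump a b δ w) - c * a ^ Y * w ^ (-Y)) =O[atTop]
      fun w => w ^ (-Y - 1) := by
  obtain ⟨D, hD⟩ := exists_abs_measureReal_mk_preimage_bigJump_sub_le h hY ha hδ hb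
  refine .of_bound (D * ∫ v, (1 + |v|) ∂ν) ?_
  filter_upwards [hD, eventually_ge_atTop 0] with w hw hw₀
  have hmeas := (measurable_measure_prodMk_right (μ := μ)
    (measurableSet_bigJump (a := a) (b := b) (δ := δ) (w := w))).ennreal_toReal
  have hslice : Integrable (fun v => μ.real ((fun u => (u, v)) ⁻¹' bigJump a b δ w)) ν :=
    .of_bound hmeas.aestronglyMeasurable (μ.real univ) (ae_of_all _ fun v => by
      rw [Real.norm_of_nonneg measureReal_nonneg]
      exact measureReal_mono (subset_univ _))
  have hmaj : Integrable (fun v => D * w ^ (-Y - 1) * (1 + |v|)) ν :=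
    ((integrable_const 1).add hid.abs).const_mul _
  have hle := norm_integral_le_of_norm_le
    (f := fun v => μ.real ((fun u => (u, v)) ⁻¹' bigJump a b δ w) - c * a ^ Y * w ^ (-Y))
    hmaj (ae_of_all ν hw)
  rw [integral_sub hslice (integrable_const _), integral_const, probReal_univ, one_smul,
    ← measureReal_prod_eq_integral measurableSet_bigJump] at hle
  refine hle.trans_eq ?_
  rw [integral_const_mul, Real.norm_of_nonneg (Real.rpow_nonneg hw₀ _)]
  ring

end OneBigJump

section Exceedance

variable {μ ν : Measure ℝ} {Y M G δ w c d : ℝ}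

/-- The event `Z⁺ + Ũ ≥ w` as a set of values of the pair `(U, V)`, where `Z = U - V` and
`Ũ = (M - 1) * U + (G + 1) * V`. -/
def exceedance (M G w : ℝ) : Set (ℝ × ℝ) :=
  {p | w ≤ max (p.1 - p.2) 0 + ((M - 1) * p.1 + (G + 1) * p.2)}

/-- The set of pairs with two large positive coordinates or with a large negative coordinate, at
scale `r`. -/
def twoBigOrNegative (r : ℝ) : Set (ℝ × ℝ) :=
  Ici r ×ˢ Ici r ∪ (Iic (-r) ×ˢ univ ∪ univ ×ˢ Iic (-r))

lemma measurableSet_exceedance : MeasurableSet (exceedance M G w) := by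
  unfold exceedance
  measurability

lemma mem_exceedance {p : ℝ × ℝ} :
    p ∈ exceedance M G w ↔
      w ≤ M * p.1 + G * p.2 ∨ w ≤ (G + 1) * p.2 + (M - 1) * p.1 := by
  change w ≤ max (p.1 - p.2) 0 + ((M - 1) * p.1 + (G + 1) * p.2) ↔ _
  rw [← max_add_add_right, le_max_iff]
  ring_nf

lemma mul_add_mul_lt_of_abs_le {a b x y : ℝ} (hw : 0 < w) (hx : |x| ≤ δ * w) (hy : |y| ≤ δ * w)
    (h : (|a| + |b|) * δ < 1) : a * x + b * y < w := by
  calc a * x + b * y ≤ |a| * |x| + |b| * |y| := by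
        rw [← abs_mul, ← abs_mul]
        gcongr <;> exact le_abs_self _
    _ ≤ |a| * (δ * w) + |b| * (δ * w) := by gcongr
    _ = (|a| + |b|) * δ * w := by ring
    _ < w := mul_lt_of_lt_one_left hw h

lemma disjoint_bigJump_preimage_swap {a b a' b' : ℝ} (hw : 0 < w) (hδ : (|a| + |b|) * δ < 1) :
    Disjoint (bigJump a b δ w) (Prod.swap ⁻¹' bigJump a' b' δ w) :=
  Set.disjoint_left.2 fun _ hp hp' => (mul_add_mul_lt_of_abs_le hw hp'.2 hp.2 hδ).not_ge hp.1

lemma bigJump_union_subset_exceedance :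
    bigJump M G δ w ∪ Prod.swap ⁻¹' bigJump (G + 1) (M - 1) δ w ⊆ exceedance M G w :=
  union_subset (fun _ hp => mem_exceedance.2 (Or.inl hp.1))
    fun _ hp => mem_exceedance.2 (Or.inr hp.1)

lemma exceedance_subset (hw : 0 < w) (h₁ : (|M| + |G|) * δ < 1)
    (h₂ : (|G + 1| + |M - 1|) * δ < 1) :
    exceedance M G w ⊆ (bigJump M G δ w ∪ Prod.swap ⁻¹' bigJump (G + 1) (M - 1) δ w) ∪
      twoBigOrNegative (δ * w) := by
  rintro ⟨u, v⟩ hp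
  rcases le_or_gt u (-(δ * w)) with hu | hu
  · exact Or.inr (Or.inr (Or.inl ⟨hu, trivial⟩))
  rcases le_or_gt v (-(δ * w)) with hv | hv
  · exact Or.inr (Or.inr (Or.inr ⟨trivial, hv⟩))
  rcases le_or_gt (δ * w) u with hu' | hu' <;> rcases le_or_gt (δ * w) v with hv' | hv'
  · exact Or.inr (Or.inl ⟨hu', hv'⟩)
  · refine Or.inl (Or.inl ⟨?_, (abs_lt.2 ⟨hv, hv'⟩).le⟩)
    rcases mem_exceedance.1 hp with h | h
    · exact h
    · linarith
  · refine Or.inl (Or.inr ⟨?_, (abs_lt.2 ⟨hu, hu'⟩).le⟩)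
    rcases mem_exceedance.1 hp with h | h
    · change w ≤ (G + 1) * v + (M - 1) * u
      linarith
    · exact h
  · have hu'' := (abs_lt.2 ⟨hu, hu'⟩).le
    have hv'' := (abs_lt.2 ⟨hv, hv'⟩).le
    rcases mem_exceedance.1 hp with h | h
    · exact absurd h (mul_add_mul_lt_of_abs_le hw hu'' hv'' h₁).not_ge
    · exact absurd h (mul_add_mul_lt_of_abs_le hw hv'' hu'' h₂).not_ge

variable [IsProbabilityMeasure μ] [IsProbabilityMeasure ν]

lemma isBigO_measureReal_twoBigOrNegative (hμ : HasParetoTail μ Y c) (hν : HasParetoTail ν Y d)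
    (hY : 1 ≤ Y) :
    (fun r => (μ.prod ν).real (twoBigOrNegative r)) =O[atTop] fun r => r ^ (-Y - 1) := by
  have hboth : (fun r => μ.real (Ici r) * ν.real (Ici r)) =O[atTop] fun r => r ^ (-Y - 1) := by
    refine ((hμ.isBigO_Ici.mul hν.isBigO_Ici).congr' .rfl ?_).trans
      (isBigO_rpow_of_le (p := -Y + -Y) (by linarith))
    filter_upwards [eventually_gt_atTop 0] with r hr
    rw [Real.rpow_add hr]
  refine IsBigO.trans (.of_bound 1 (.of_forall fun r => ?_))
    (hboth.add (hμ.isBigO_Iic_neg.add hν.isBigO_Iic_neg))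
  rw [one_mul, Real.norm_of_nonneg measureReal_nonneg]
  refine le_trans ?_ (Real.le_norm_self _)
  refine (measureReal_union_le _ _).trans ?_
  rw [measureReal_prod_prod]
  gcongr
  refine (measureReal_union_le _ _).trans_eq ?_
  simp only [measureReal_prod_prod, probReal_univ, mul_one, one_mul]

theorem isBigO_measureReal_exceedance_sub (hμ : HasParetoTail μ Y c) (hν : HasParetoTail ν Y d)
    (hY : 1 < Y) (hM : 0 < M) (hG : -1 < G) :
    (fun w => (μ.prod ν).real (exceedance M G w) -
        (c * M ^ Y * w ^ (-Y) + d * (G + 1) ^ Y * w ^ (-Y))) =O[atTop]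
      fun w => w ^ (-Y - 1) := by
  obtain ⟨δ, hδ, h₁, h₂⟩ : ∃ δ : ℝ, 0 < δ ∧ (|M| + |G|) * δ ≤ 2⁻¹ ∧
      (|G + 1| + |M - 1|) * δ ≤ 2⁻¹ := by
    refine ⟨2⁻¹ * (1 + (|M| + |G|) + (|G + 1| + |M - 1|))⁻¹, by positivity, ?_, ?_⟩
    all_goals
      rw [mul_left_comm, mul_le_iff_le_one_right (by norm_num)]
      refine mul_inv_le_one_of_le₀ ?_ (by positivity)
      linarith [abs_nonneg M, abs_nonneg G, abs_nonneg (G + 1), abs_nonneg (M - 1)]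
  have hfst := isBigO_measureReal_bigJump_sub (b := G) hμ (by linarith) (hν.integrable_id hY) hM hδ
    (by nlinarith [abs_nonneg M])
  have hsnd := isBigO_measureReal_bigJump_sub (a := G + 1) (b := M - 1) hν (by linarith)
    (hμ.integrable_id hY) (by linarith) hδ (by nlinarith [abs_nonneg (G + 1)])
  have herr := isBigO_comp_const_mul (isBigO_measureReal_twoBigOrNegative hμ hν hY.le) hδ
  have hjump (w : ℝ) (hw : 0 < w) :
      (μ.prod ν).real (bigJump M G δ w ∪ Prod.swap ⁻¹' bigJump (G + 1) (M - 1) δ w) =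
        (μ.prod ν).real (bigJump M G δ w) + (ν.prod μ).real (bigJump (G + 1) (M - 1) δ w) := by
    rw [measureReal_union (disjoint_bigJump_preimage_swap hw (by linarith))
      (measurable_swap measurableSet_bigJump),
      Measure.measurePreserving_swap.measureReal_preimage measurableSet_bigJump.nullMeasurableSet]
  refine isBigO_of_le_of_le (hfst.add hsnd) ((hfst.add hsnd).add herr) ?_ ?_
  all_goals filter_upwards [eventually_gt_atTop 0] with w hw
  · linarith [hjump w hw, measureReal_mono (μ := μ.prod ν)
      (bigJump_union_subset_exceedance (M := M) (G := G) (δ := δ) (w := w))]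
  · have hsub := exceedance_subset (M := M) (G := G) (δ := δ) hw (by linarith) (by linarith)
    linarith [hjump w hw, (measureReal_mono (μ := μ.prod ν) hsub).trans (measureReal_union_le _ _)]

end Exceedance

section Integrability

lemma locallyIntegrable_rpow {p : ℝ} (hp : -1 < p) :
    LocallyIntegrable (fun x : ℝ => x ^ p) := by
  refine locallyIntegrable_of_norm_le_rpow (C := 1) (α := -p) (by simp) ?_ (ae_of_all _ fun x => ?_)
    (by fun_prop)
  · rw [Module.finrank_self, Nat.cast_one]
    linarith
  · rw [one_mul, neg_neg]
    exact Real.abs_rpow_le_abs_rpow x p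

lemma integrableOn_mul_sub_rpow {T : ℝ → ℝ} {Y κ : ℝ} (hY : Y ∈ Ioo 1 2)
    (hT : LocallyIntegrableOn T (Ici 0))
    (hO : (fun w => T w - κ * w ^ (-Y)) =O[atTop] fun w => w ^ (-Y - 1)) :
    IntegrableOn (fun w => w * (T w - κ * w ^ (-Y))) (Ici 0) := by
  have hsplit : EqOn (fun w => w * T w - κ * w ^ (1 - Y)) (fun w => w * (T w - κ * w ^ (-Y)))
      (Ici 0) := fun w hw => by
    dsimp only
    rw [sub_eq_add_neg 1 Y, Real.rpow_one_add' hw (by linarith [hY.1])]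
    ring
  have hloc : LocallyIntegrableOn (fun w => w * T w - κ * w ^ (1 - Y)) (Ici 0) :=
    (hT.continuousOn_mul continuousOn_id isClosed_Ici.isLocallyClosed).sub
      (((locallyIntegrable_rpow (by linarith [hY.2])).smul κ).locallyIntegrableOn _)
  have htop : (fun w => w * T w - κ * w ^ (1 - Y)) =O[atTop] fun w => w ^ (-Y) := by
    refine ((isBigO_refl (fun w : ℝ => w) atTop).mul hO).congr' ?_ ?_
    all_goals filter_upwards [eventually_gt_atTop 0] with w hw
    · exact (hsplit hw.le).symm
    · rw [Real.rpow_sub_one hw.ne', mul_div_cancel₀ _ hw.ne']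
  exact (hloc.integrableOn_of_isBigO_atTop htop
    (integrableAtFilter_rpow_atTop_iff.2 (by linarith [hY.1]))).congr_fun hsplit measurableSet_Ici

end Integrability

section IndependentPair

variable {Ω : Type*} [MeasurableSpace Ω] {P : Measure Ω} {U V : Ω → ℝ}

lemma isSpectrallyPositiveStable_map_iff {Y C : ℝ} (hY : Y ≠ 0) (hU : AEMeasurable U P) :
    IsSpectrallyPositiveStable (P.map U) Y C ↔
      ∀ u : ℝ, (∫ ω, Complex.exp (Complex.I * u * (U ω)) ∂P) =
        Complex.exp (((C * Real.Gamma (-Y) * |u| ^ Y : ℝ) : ℂ) *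
          (((Real.cos (Real.pi * Y / 2) : ℝ) : ℂ)
            - Complex.I * ((Real.sign u : ℝ) : ℂ) * ((Real.sin (Real.pi * Y / 2) : ℝ) : ℂ))) := by
  refine forall_congr' fun u => ?_
  rw [charFun_apply_real, integral_map hU (by fun_prop), neg_mul_I_cpow hY]
  push_cast
  simp only [mul_comm, mul_left_comm, mul_assoc]

lemma measureReal_prodMk_preimage_of_indepFun {β β' : Type*} [MeasurableSpace β]
    [MeasurableSpace β'] [IsFiniteMeasure P] {X : Ω → β} {X' : Ω → β'} (h : IndepFun X X' P)
    (hX : AEMeasurable X P) (hX' : AEMeasurable X' P) {S : Set (β × β')} (hS : MeasurableSet S) :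
    P.real ((fun ω => (X ω, X' ω)) ⁻¹' S) = ((P.map X).prod (P.map X')).real S := by
  rw [← (indepFun_iff_map_prod_eq_prod_map_map hX hX').1 h,
    map_measureReal_apply_of_aemeasurable (hX.prodMk hX') hS]

theorem stmt6_general [IsProbabilityMeasure P] {Y C D M G : ℝ} (hY : Y ∈ Ioo 1 2) (hM : 0 < M)
    (hG : -1 < G) (hU : AEMeasurable U P) (hV : AEMeasurable V P) (hUV : IndepFun U V P)
    (hU' : IsSpectrallyPositiveStable (P.map U) Y C)
    (hV' : IsSpectrallyPositiveStable (P.map V) Y D) :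
    IntegrableOn (fun w => w *
      (P.real {ω | w ≤ max (U ω - V ω) 0 + ((M - 1) * U ω + (G + 1) * V ω)}
        - C * M ^ Y / (Y * w ^ Y) - D * (G + 1) ^ Y / (Y * w ^ Y))) (Ioi 0) := by
  have := Measure.isProbabilityMeasure_map hU
  have := Measure.isProbabilityMeasure_map hV
  set T : ℝ → ℝ := fun w => ((P.map U).prod (P.map V)).real (exceedance M G w)
  have hT : Antitone T := fun _ _ h => measureReal_mono fun _ hp => h.trans hp
  have htail := isBigO_measureReal_exceedance_sub (hU'.hasParetoTail hY) (hV'.hasParetoTail hY)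
    hY.1 hM hG
  simp only [← add_mul] at htail
  refine ((integrableOn_mul_sub_rpow hY (hT.locallyIntegrable.locallyIntegrableOn _) htail).mono_set
    Ioi_subset_Ici_self).congr_fun (fun w hw => ?_) measurableSet_Ioi
  have hprob : P.real {ω | w ≤ max (U ω - V ω) 0 + ((M - 1) * U ω + (G + 1) * V ω)} = T w :=
    measureReal_prodMk_preimage_of_indepFun hUV hU hV measurableSet_exceedance
  beta_reduce
  rw [hprob, Real.rpow_neg (le_of_lt hw)]
  ring

end IndependentPair

/-- Finiteness of the third-order coefficient integral: the function
`w ↦ w·(P(Z⁺ + Ũ ≥ w) − C·M^Y/(Y·w^Y) − C·(G+1)^Y/(Y·w^Y))` is Lebesgue integrable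
on `(0,∞)`, where `Z = U − V` and `Ũ = (M−1)·U + (G+1)·V`. -/
theorem stmt6
    {Ω : Type} [MeasurableSpace Ω] (P : Measure Ω) [IsProbabilityMeasure P]
    (Y C M G : ℝ) (hY : Y ∈ Set.Ioo (1:ℝ) 2) (hC : 0 < C) (hM : 1 < M) (hG : 0 < G)
    (U V : Ω → ℝ) (hU : Measurable U) (hV : Measurable V)
    (hIndep : IndepFun U V P)
    (hUchar : ∀ u : ℝ, (∫ ω, Complex.exp (Complex.I * u * (U ω)) ∂P) =
      Complex.exp (((C * Real.Gamma (-Y) * |u| ^ Y : ℝ) : ℂ) *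
        (((Real.cos (Real.pi * Y / 2) : ℝ) : ℂ)
          - Complex.I * ((Real.sign u : ℝ) : ℂ) * ((Real.sin (Real.pi * Y / 2) : ℝ) : ℂ))))
    (hVchar : ∀ u : ℝ, (∫ ω, Complex.exp (Complex.I * u * (V ω)) ∂P) =
      Complex.exp (((C * Real.Gamma (-Y) * |u| ^ Y : ℝ) : ℂ) *
        (((Real.cos (Real.pi * Y / 2) : ℝ) : ℂ)
          - Complex.I * ((Real.sign u : ℝ) : ℂ) * ((Real.sin (Real.pi * Y / 2) : ℝ) : ℂ))))
    (Z Ut : Ω → ℝ)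
    (hZ : Z = fun ω => U ω - V ω)
    (hUt : Ut = fun ω => (M - 1) * U ω + (G + 1) * V ω) :
    IntegrableOn
      (fun w => w * ((P {ω | w ≤ max (Z ω) 0 + Ut ω}).toReal
        - C * M ^ Y / (Y * w ^ Y) - C * (G+1) ^ Y / (Y * w ^ Y)))
      (Set.Ioi 0) := by
  have hY₀ : Y ≠ 0 := (one_pos.trans hY.1).ne'
  subst hZ hUt
  exact stmt6_general hY (by linarith) (by linarith) hU.aemeasurable hV.aemeasurable hIndep
    ((isSpectrallyPositiveStable_map_iff hY₀ hU.aemeasurable).2 hUchar)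
    ((isSpectrallyPositiveStable_map_iff hY₀ hV.aemeasurable).2 hVchar)
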